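/- arXiv:1203.1198 — 2 statements merged into one kernel-verified Lean document; each statement's English description precedes it below -/
import Mathlib

section
/- Let G be a group generated by a finite set X, with word length ℓ, and let 𝒫 ⊆ G × G. Suppose that: (D1) there is a polynomial P_1 with nonnegative coefficients such that F_{𝒫,k,l} ≤ P_1(min(k,l)) for all k, l ∈ ℕ; and (D2) there are a constant K ≥ 1 and polynomials P_2, P_3 with nonnegative coefficients and, for each g ∈ G and k, l ∈ ℕ, a subset S(g,k,l) ⊆ G³ such that: (i) for every decomposition g = g_1 g_2 with ℓ(g_1) = k and ℓ(g_2) = l there exist (f_1, ĝ, f_2) ∈ S(g,k,l), elements h_1, h_2 ∈ G, and natural numbers p_1 ≤ k, p_2 ≤ l with p_1, p_2 ≤ K·min(k,l), such that g = f_1 ĝ f_2, ĝ = h_1 h_2, (f_1, h_1) ∈ Fact_{𝒫,k−p_1,p_1}(g_1) and (h_2, f_2) ∈ Fact_{𝒫,p_2,l−p_2}(g_2); (ii) |S(g,k,l)| ≤ P_2(min(k,l)) for all g, k, l; (iii) |T(k,l)| ≤ P_3(min(k,l)) for all k, l, where T(k,l) = {ĝ ∈ G : (f_1, ĝ, f_2)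 ∈ S(g,k,l) for some g, f_1, f_2}. Then G has the rapid decay property with respect to ℓ. -/
open scoped Pointwise

namespace ArtinRD

/-- Word length of `g` with respect to a set `S`: the least `N` such that `g` is a
product of `N` elements of `S`. -/
noncomputable def wordLength {G : Type*} [Group G] (S : Set G) (g : G) : ℕ :=
  sInf {N : ℕ | ∃ w : List G, (∀ a ∈ w, a ∈ S) ∧ w.length = N ∧ w.prod = g}

/-- `Fact_{𝒬,k,l}(g)`: permissible factorisations of `g` into a product of elements
of lengths `k` and `l`. -/
def FactSet {G : Type*} [Group G] (ℓ : G → ℕ) (𝒬 : Set (G × G)) (k l : ℕ) (g : G) :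
    Set (G × G) :=
  {p | p ∈ 𝒬 ∧ p.1 * p.2 = g ∧ ℓ p.1 = k ∧ ℓ p.2 = l}

/-- `T(k,l)`: the set of middle elements `gmid` occurring in some `S(g,k,l)`. -/
def TSet {G : Type*} (S : G → ℕ → ℕ → Set (G × G × G)) (k l : ℕ) : Set G :=
  {g' | ∃ g f₁ f₂, (f₁, g', f₂) ∈ S g k l}

/-- Convolution of finitely supported functions on a group. -/
noncomputable def conv {G : Type*} [Group G] (φ ψ : G →₀ ℂ) : G → ℂ :=
  fun g => φ.sum fun h c => c * ψ (h⁻¹ * g)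

/-- The `ℓ²` norm of a function on `G`. -/
noncomputable def l2Norm {G : Type*} (f : G → ℂ) : ℝ := Real.sqrt (∑' g : G, ‖f g‖ ^ 2)

/-- The Sobolev norm of order `r` with respect to the length function `ℓ`. -/
noncomputable def sobolevNorm {G : Type*} (ℓ : G → ℕ) (r : ℝ) (f : G → ℂ) : ℝ :=
  Real.sqrt (∑' g : G, ‖f g‖ ^ 2 * (1 + (ℓ g : ℝ)) ^ (2 * r))

/-- The rapid decay property of `G` with respect to the length function `ℓ`. -/
def RapidDecay {G : Type*} [Group G] (ℓ : G → ℕ) : Prop :=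
  ∃ C : ℝ, 0 < C ∧ ∃ r : ℝ, 0 ≤ r ∧
    ∀ φ ψ : G →₀ ℂ,
      l2Norm (conv φ ψ) ≤ C * sobolevNorm ℓ r (fun g => φ g) * l2Norm (fun g => ψ g)

open scoped ENNReal

section helpers

theorem cs_finset {ι : Type*} (s : Finset ι) (f g : ι → ℝ≥0∞) :
    (∑ i ∈ s, f i * g i) ^ 2 ≤ (∑ i ∈ s, f i ^ 2) * ∑ i ∈ s, g i ^ 2 := by
  have h := ENNReal.inner_le_Lp_mul_Lq s f g (p := 2) (q := 2) Real.HolderConjugate.two_two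
  have h2 := pow_le_pow_left' h 2
  refine h2.trans (le_of_eq ?_)
  rw [mul_pow, ← ENNReal.rpow_natCast, ← ENNReal.rpow_natCast, ← ENNReal.rpow_mul,
    ← ENNReal.rpow_mul]
  norm_num

theorem cs_tsum {ι : Type*} (f g : ι → ℝ≥0∞) :
    (∑' i, f i * g i) ^ 2 ≤ (∑' i, f i ^ 2) * ∑' i, g i ^ 2 := by
  have key : Filter.Tendsto (fun s : Finset ι => (∑ i ∈ s, f i * g i) ^ 2) Filter.atTop
      (nhds ((∑' i, f i * g i) ^ 2)) :=
    ((ENNReal.continuous_pow 2).tendsto _).comp ENNReal.summable.hasSum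
  refine le_of_tendsto' key fun s => (cs_finset s f g).trans ?_
  exact mul_le_mul' (ENNReal.sum_le_tsum s) (ENNReal.sum_le_tsum s)

theorem sq_sum_card {ι : Type*} (s : Finset ι) (f : ι → ℝ≥0∞) :
    (∑ i ∈ s, f i) ^ 2 ≤ (s.card : ℝ≥0∞) * ∑ i ∈ s, f i ^ 2 := by
  simpa using cs_finset s (fun _ => 1) f

/-- convolution of nonnegative functions -/
noncomputable def econv {G : Type*} [Group G] (φ ψ : G → ℝ≥0∞) (g : G) : ℝ≥0∞ :=
  ∑' h, φ h * ψ (h⁻¹ * g)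

theorem tsum_ite_le {α : Type*} (p : α → Prop) [DecidablePred p] (N : ℕ)
    (hf : {a | p a}.Finite) (hN : {a | p a}.ncard ≤ N) (c : ℝ≥0∞) :
    ∑' a, (if p a then c else 0) ≤ N * c := by
  rw [tsum_eq_sum (s := hf.toFinset) (fun b hb => if_neg (by simpa using hb))]
  rw [Finset.sum_congr rfl (fun x hx => if_pos (by simpa using hx)), Finset.sum_const,
    nsmul_eq_mul, ← Set.ncard_eq_toFinset_card _ hf]
  gcongr

open Classical in
theorem fact_left {G : Type*} [Group G] (ℓ : G → ℕ) (𝒬 : Set (G × G)) (k p N : ℕ)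
    (hp : p ≤ k)
    (hD : ∀ g, ℓ g = k → (FactSet ℓ 𝒬 (k - p) p g).Finite ∧
      (FactSet ℓ 𝒬 (k - p) p g).ncard ≤ N)
    (φ : G → ℝ≥0∞) (hφ : ∀ g, φ g ≠ 0 → ℓ g = k) :
    ∑' f, ∑' h, (if (f, h) ∈ 𝒬 ∧ ℓ f = k - p ∧ ℓ h = p then φ (f * h) ^ 2 else 0)
      ≤ N * ∑' g, φ g ^ 2 := by
  have h1 : ∀ f, ∑' h, (if (f, h) ∈ 𝒬 ∧ ℓ f = k - p ∧ ℓ h = p then φ (f * h) ^ 2 else 0)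
      = ∑' x, (if (f, f⁻¹ * x) ∈ 𝒬 ∧ ℓ f = k - p ∧ ℓ (f⁻¹ * x) = p then φ x ^ 2 else 0) := by
    intro f
    symm
    rw [← (Equiv.mulLeft f).tsum_eq]
    simp
  simp_rw [h1]
  rw [ENNReal.tsum_comm, ← ENNReal.tsum_mul_left]
  refine ENNReal.tsum_le_tsum fun x => ?_
  by_cases hx : φ x = 0
  · simp [hx]
  obtain ⟨hfin, hcard⟩ := hD x (hφ x hx)
  have himg : {f | (f, f⁻¹ * x) ∈ 𝒬 ∧ ℓ f = k - p ∧ ℓ (f⁻¹ * x) = p} ⊆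
      Prod.fst '' FactSet ℓ 𝒬 (k - p) p x := by
    rintro f ⟨a, b, c⟩
    exact ⟨(f, f⁻¹ * x), ⟨a, by simp, b, c⟩, rfl⟩
  refine tsum_ite_le _ N ((hfin.image _).subset himg) ?_ _
  exact (Set.ncard_le_ncard himg (hfin.image _)).trans ((Set.ncard_image_le hfin).trans hcard)

open Classical in
theorem fact_right {G : Type*} [Group G] (ℓ : G → ℕ) (𝒬 : Set (G × G)) (l p N : ℕ)
    (hp : p ≤ l)
    (hD : ∀ g, ℓ g = l → (FactSet ℓ 𝒬 p (l - p) g).Finite ∧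
      (FactSet ℓ 𝒬 p (l - p) g).ncard ≤ N)
    (ψ : G → ℝ≥0∞) (hψ : ∀ g, ψ g ≠ 0 → ℓ g = l) :
    ∑' f, ∑' h, (if (h, f) ∈ 𝒬 ∧ ℓ h = p ∧ ℓ f = l - p then ψ (h * f) ^ 2 else 0)
      ≤ N * ∑' g, ψ g ^ 2 := by
  have h1 : ∀ f, ∑' h, (if (h, f) ∈ 𝒬 ∧ ℓ h = p ∧ ℓ f = l - p then ψ (h * f) ^ 2 else 0)
      = ∑' x, (if (x * f⁻¹, f) ∈ 𝒬 ∧ ℓ (x * f⁻¹) = p ∧ ℓ f = l - p then ψ x ^ 2 else 0) := by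
    intro f
    symm
    rw [← (Equiv.mulRight f).tsum_eq]
    simp
  simp_rw [h1]
  rw [ENNReal.tsum_comm, ← ENNReal.tsum_mul_left]
  refine ENNReal.tsum_le_tsum fun x => ?_
  by_cases hx : ψ x = 0
  · simp [hx]
  obtain ⟨hfin, hcard⟩ := hD x (hψ x hx)
  have himg : {f | (x * f⁻¹, f) ∈ 𝒬 ∧ ℓ (x * f⁻¹) = p ∧ ℓ f = l - p} ⊆
      Prod.snd '' FactSet ℓ 𝒬 p (l - p) x := by
    rintro f ⟨a, b, c⟩
    exact ⟨(x * f⁻¹, f), ⟨a, by simp, b, c⟩, rfl⟩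
  refine tsum_ite_le _ N ((hfin.image _).subset himg) ?_ _
  exact (Set.ncard_le_ncard himg (hfin.image _)).trans ((Set.ncard_image_le hfin).trans hcard)

open Classical in
theorem middle {G : Type*} [Group G] (S : G → Set (G × G × G)) (hS : ∀ g, (S g).Finite)
    (T : Set G) (hT : T.Finite) (N : ℕ) (hN : T.ncard ≤ N)
    (hST : ∀ g s, s ∈ S g → s.2.1 ∈ T) (F H : G → ℝ≥0∞) :
    ∑' g, ∑ s ∈ (hS g).toFinset, (if g = s.1 * s.2.1 * s.2.2 then F s.1 * H s.2.2 else 0)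
      ≤ N * ((∑' f, F f) * ∑' f, H f) := by
  calc _ ≤ ∑' g, ∑' s : G × G × G, (if s.2.1 ∈ T then
        (if g = s.1 * s.2.1 * s.2.2 then F s.1 * H s.2.2 else 0) else 0) := by
        refine ENNReal.tsum_le_tsum fun g => ?_
        refine le_trans (le_of_eq ?_) (ENNReal.sum_le_tsum (hS g).toFinset)
        refine Finset.sum_congr rfl fun s hs => ?_
        rw [if_pos (hST g s (by simpa using hs))]
    _ = ∑' s : G × G × G, (if s.2.1 ∈ T then F s.1 * H s.2.2 else 0) := by
        rw [ENNReal.tsum_comm]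
        refine tsum_congr fun s => ?_
        by_cases h : s.2.1 ∈ T
        · simp only [h, if_true]
          exact tsum_ite_eq _ _
        · simp [h]
    _ = ∑' f, ∑' m, ∑' f', (if m ∈ T then F f * H f' else 0) := by
        rw [ENNReal.tsum_prod']
        refine tsum_congr fun f => ?_
        rw [ENNReal.tsum_prod']
    _ ≤ ∑' f, N * (F f * ∑' f', H f') := by
        refine ENNReal.tsum_le_tsum fun f => ?_
        have : ∀ m, ∑' f', (if m ∈ T then F f * H f' else 0)
            = if m ∈ T then F f * ∑' f', H f' else 0 := by
          intro m
          by_cases h : m ∈ T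
          · simp [h, ENNReal.tsum_mul_left]
          · simp [h]
        simp_rw [this]
        exact tsum_ite_le (fun m => m ∈ T) N hT hN _
    _ = _ := by
        rw [ENNReal.tsum_mul_left, ENNReal.tsum_mul_right]

open Classical in
theorem key_kl {G : Type*} [Group G] (ℓ : G → ℕ) (𝒬 : Set (G × G)) (k l q N₁ N₂ N₃ : ℕ)
    (hDl : ∀ p ≤ q, p ≤ k → ∀ g, ℓ g = k → (FactSet ℓ 𝒬 (k - p) p g).Finite ∧
      (FactSet ℓ 𝒬 (k - p) p g).ncard ≤ N₁)
    (hDr : ∀ p ≤ q, p ≤ l → ∀ g, ℓ g = l → (FactSet ℓ 𝒬 p (l - p) g).Finite ∧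
      (FactSet ℓ 𝒬 p (l - p) g).ncard ≤ N₁)
    (S : G → Set (G × G × G)) (hS : ∀ g, (S g).Finite) (hS2 : ∀ g, (S g).ncard ≤ N₂)
    (T : Set G) (hT : T.Finite) (hN : T.ncard ≤ N₃)
    (hST : ∀ g s, s ∈ S g → s.2.1 ∈ T)
    (hcover : ∀ (g g₁ g₂ : G), g = g₁ * g₂ → ℓ g₁ = k → ℓ g₂ = l →
      ∃ f₁ gmid f₂ h₁ h₂ : G, ∃ p₁ p₂ : ℕ,
        (f₁, gmid, f₂) ∈ S g ∧ p₁ ≤ k ∧ p₂ ≤ l ∧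
        p₁ ≤ q ∧ p₂ ≤ q ∧
        g = f₁ * gmid * f₂ ∧ gmid = h₁ * h₂ ∧
        (f₁, h₁) ∈ FactSet ℓ 𝒬 (k - p₁) p₁ g₁ ∧
        (h₂, f₂) ∈ FactSet ℓ 𝒬 p₂ (l - p₂) g₂)
    (φ ψ : G → ℝ≥0∞) (hφ : ∀ g, φ g ≠ 0 → ℓ g = k) (hψ : ∀ g, ψ g ≠ 0 → ℓ g = l) :
    ∑' g, econv φ ψ g ^ 2 ≤
      ((q + 1) ^ 4 * N₂ * N₃ * N₁ ^ 2 : ℕ) * ((∑' g, φ g ^ 2) * ∑' g, ψ g ^ 2) := by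
  set a : ℕ → G → G → ℝ≥0∞ := fun p f h =>
    if p ≤ k then (if (f, h) ∈ 𝒬 ∧ ℓ f = k - p ∧ ℓ h = p then φ (f * h) else 0) else 0 with ha
  set b : ℕ → G → G → ℝ≥0∞ := fun p f h =>
    if p ≤ l then (if (h, f) ∈ 𝒬 ∧ ℓ h = p ∧ ℓ f = l - p then ψ (h * f) else 0) else 0 with hb
  have hA : ∀ p ≤ q, ∑' f, ∑' h, a p f h ^ 2 ≤ N₁ * ∑' g, φ g ^ 2 := by
    intro p hp
    by_cases hpk : p ≤ k
    · refine le_trans (le_of_eq ?_) (fact_left ℓ 𝒬 k p N₁ hpk (hDl p hp hpk) φ hφ)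
      simp only [ha, hpk, if_true, ite_pow]
      simp
    · simp [ha, hpk]
  have hB : ∀ p ≤ q, ∑' f, ∑' h, b p f h ^ 2 ≤ N₁ * ∑' g, ψ g ^ 2 := by
    intro p hp
    by_cases hpk : p ≤ l
    · refine le_trans (le_of_eq ?_) (fact_right ℓ 𝒬 l p N₁ hpk (hDr p hp hpk) ψ hψ)
      simp only [hb, hpk, if_true, ite_pow]
      simp
    · simp [hb, hpk]
  set R := Finset.range (q + 1) ×ˢ Finset.range (q + 1) with hR
  -- pointwise bound
  have h1 : ∀ g, econv φ ψ g ≤ ∑ i ∈ R ×ˢ (hS g).toFinset,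
      (if g = i.2.1 * i.2.2.1 * i.2.2.2 then
        ∑' h, a i.1.1 i.2.1 h * b i.1.2 i.2.2.2 (h⁻¹ * i.2.2.1) else 0) := by
    intro g
    have h2 : ∀ i : (ℕ × ℕ) × G × G × G, (if g = i.2.1 * i.2.2.1 * i.2.2.2 then
        ∑' h, a i.1.1 i.2.1 h * b i.1.2 i.2.2.2 (h⁻¹ * i.2.2.1) else 0) =
        ∑' x, (if g = i.2.1 * i.2.2.1 * i.2.2.2 then
          a i.1.1 i.2.1 (i.2.1⁻¹ * x) * b i.1.2 i.2.2.2 ((i.2.1⁻¹ * x)⁻¹ * i.2.2.1) else 0) := by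
      intro i
      split_ifs
      · rw [← (Equiv.mulLeft i.2.1⁻¹).tsum_eq]
        simp
      · simp
    simp_rw [h2]
    rw [← Summable.tsum_finsetSum (fun _ _ => ENNReal.summable)]
    refine ENNReal.tsum_le_tsum fun x => ?_
    by_cases hx : φ x = 0
    · simp [hx]
    by_cases hy : ψ (x⁻¹ * g) = 0
    · simp [hy]
    obtain ⟨f₁, m, f₂, e₁, e₂, p₁, p₂, hs, hp1, hp2, hq1, hq2, hg, hm, hf1, hf2⟩ :=
      hcover g x (x⁻¹ * g) (by simp) (hφ _ hx) (hψ _ hy)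
    obtain ⟨c1, c2, c3, c4⟩ := hf1
    obtain ⟨d1, d2, d3, d4⟩ := hf2
    simp only at c1 c2 c3 c4 d1 d2 d3 d4
    have hmem : ((p₁, p₂), (f₁, m, f₂)) ∈ R ×ˢ (hS g).toFinset := by
      simp only [hR, Finset.mem_product, Finset.mem_range, Set.Finite.mem_toFinset]
      exact ⟨⟨by omega, by omega⟩, hs⟩
    refine le_trans (le_of_eq ?_) (Finset.single_le_sum (fun _ _ => zero_le) hmem)
    have e1 : f₁⁻¹ * x = e₁ := by rw [← c2]; simp
    have e2 : e₁⁻¹ * m = e₂ := by rw [hm]; simp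
    simp only [e1, e2]
    rw [if_pos hg]
    simp only [ha, hb, hp1, hp2, if_true]
    rw [if_pos ⟨c1, c3, c4⟩, if_pos ⟨d1, d3, d4⟩, c2, d2]
  set F : ℕ → G → ℝ≥0∞ := fun p f => ∑' h, a p f h ^ 2 with hF
  set H : ℕ → G → ℝ≥0∞ := fun p f => ∑' h, b p f h ^ 2 with hH
  have h3 : ∀ g, econv φ ψ g ^ 2 ≤ (((q + 1) ^ 2 * N₂ : ℕ) : ℝ≥0∞) *
      ∑ p ∈ R, ∑ s ∈ (hS g).toFinset,
        (if g = s.1 * s.2.1 * s.2.2 then F p.1 s.1 * H p.2 s.2.2 else 0) := by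
    intro g
    refine (pow_le_pow_left' (h1 g) 2).trans ((sq_sum_card _ _).trans ?_)
    rw [← Finset.sum_product (s := R) (t := (hS g).toFinset) (f := fun i =>
      (if g = i.2.1 * i.2.2.1 * i.2.2.2 then F i.1.1 i.2.1 * H i.1.2 i.2.2.2 else 0))]
    refine mul_le_mul' ?_ (Finset.sum_le_sum fun i _ => ?_)
    · rw [Finset.card_product, hR, Finset.card_product, Finset.card_range,
        ← Set.ncard_eq_toFinset_card _ (hS g), sq]
      exact_mod_cast Nat.mul_le_mul_left _ (hS2 g)
    · split_ifs
      · refine (cs_tsum _ _).trans (mul_le_mul' le_rfl (le_of_eq ?_))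
        exact ((Equiv.inv G).trans (Equiv.mulRight i.2.2.1)).tsum_eq
          (fun h => b i.1.2 i.2.2.2 h ^ 2)
      · simp
  calc _ ≤ ∑' g, (((q + 1) ^ 2 * N₂ : ℕ) : ℝ≥0∞) *
      ∑ p ∈ R, ∑ s ∈ (hS g).toFinset,
        (if g = s.1 * s.2.1 * s.2.2 then F p.1 s.1 * H p.2 s.2.2 else 0) :=
        ENNReal.tsum_le_tsum h3
    _ = (((q + 1) ^ 2 * N₂ : ℕ) : ℝ≥0∞) * ∑ p ∈ R, ∑' g, ∑ s ∈ (hS g).toFinset,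
        (if g = s.1 * s.2.1 * s.2.2 then F p.1 s.1 * H p.2 s.2.2 else 0) := by
        rw [ENNReal.tsum_mul_left, Summable.tsum_finsetSum (fun _ _ => ENNReal.summable)]
    _ ≤ (((q + 1) ^ 2 * N₂ : ℕ) : ℝ≥0∞) * ∑ p ∈ R,
        (N₃ : ℝ≥0∞) * ((N₁ * ∑' g, φ g ^ 2) * (N₁ * ∑' g, ψ g ^ 2)) := by
        refine mul_le_mul' le_rfl (Finset.sum_le_sum fun p hp => ?_)
        simp only [hR, Finset.mem_product, Finset.mem_range] at hp
        refine (middle S hS T hT N₃ hN hST (F p.1) (H p.2)).trans ?_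
        exact mul_le_mul' le_rfl (mul_le_mul' (hA _ (by omega)) (hB _ (by omega)))
    _ = _ := by
        rw [Finset.sum_const, hR, Finset.card_product, Finset.card_range, nsmul_eq_mul]
        push_cast
        ring

theorem key_k {G : Type*} [Group G] (ℓ : G → ℕ) (hinv : ∀ g, ℓ g⁻¹ = ℓ g)
    (hsub : ∀ g h, ℓ (g * h) ≤ ℓ g + ℓ h) (k : ℕ) (B : ℝ≥0∞)
    (φ : G → ℝ≥0∞) (hφ : ∀ g, φ g ≠ 0 → ℓ g = k)
    (hB : ∀ l, ∀ ψ : G → ℝ≥0∞, (∀ g, ψ g ≠ 0 → ℓ g = l) →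
      ∑' g, econv φ ψ g ^ 2 ≤ B * ((∑' g, φ g ^ 2) * ∑' g, ψ g ^ 2))
    (ψ : G → ℝ≥0∞) :
    ∑' g, econv φ ψ g ^ 2 ≤
      ((2 * k + 1 : ℕ) : ℝ≥0∞) * (B * ((∑' g, φ g ^ 2) * ∑' g, ψ g ^ 2)) := by
  set ψl : ℕ → G → ℝ≥0∞ := fun l x => if ℓ x = l then ψ x else 0 with hψl
  have h1 : ∀ g, econv φ ψ g ≤ ∑ l ∈ Finset.Icc (ℓ g - k) (ℓ g + k), econv φ (ψl l) g := by
    intro g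
    unfold econv
    rw [← Summable.tsum_finsetSum (fun _ _ => ENNReal.summable)]
    refine ENNReal.tsum_le_tsum fun x => ?_
    by_cases hx : φ x = 0
    · simp [hx]
    have hxk := hφ x hx
    have hm : ℓ (x⁻¹ * g) ∈ Finset.Icc (ℓ g - k) (ℓ g + k) := by
      have a1 := hsub x⁻¹ g
      have a2 := hsub x (x⁻¹ * g)
      rw [hinv] at a1
      rw [mul_inv_cancel_left] at a2
      rw [Finset.mem_Icc]
      omega
    refine le_trans (le_of_eq ?_) (Finset.single_le_sum (fun _ _ => zero_le) hm)
    simp [hψl]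
  have h2 : ∀ g, econv φ ψ g ^ 2 ≤
      ((2 * k + 1 : ℕ) : ℝ≥0∞) * ∑' l, econv φ (ψl l) g ^ 2 := by
    intro g
    refine (pow_le_pow_left' (h1 g) 2).trans ((sq_sum_card _ _).trans ?_)
    refine mul_le_mul' ?_ (ENNReal.sum_le_tsum _)
    rw [Nat.card_Icc]
    exact_mod_cast (by omega : ℓ g + k + 1 - (ℓ g - k) ≤ 2 * k + 1)
  calc _ ≤ ∑' g, ((2 * k + 1 : ℕ) : ℝ≥0∞) * ∑' l, econv φ (ψl l) g ^ 2 :=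
        ENNReal.tsum_le_tsum h2
    _ = ((2 * k + 1 : ℕ) : ℝ≥0∞) * ∑' l, ∑' g, econv φ (ψl l) g ^ 2 := by
        rw [ENNReal.tsum_mul_left, ENNReal.tsum_comm]
    _ ≤ ((2 * k + 1 : ℕ) : ℝ≥0∞) * ∑' l, B * ((∑' g, φ g ^ 2) * ∑' g, ψl l g ^ 2) := by
        refine mul_le_mul' le_rfl (ENNReal.tsum_le_tsum fun l => hB l _ fun g hg => ?_)
        by_contra hne
        simp [hψl, hne] at hg
    _ = _ := by
        rw [ENNReal.tsum_mul_left, ENNReal.tsum_mul_left, ENNReal.tsum_comm]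
        congr 4
        funext g
        simp only [hψl, ite_pow]
        rw [tsum_eq_single (ℓ g)]
        · simp
        · intro b hb
          simp [hb.symm]

theorem zeta_ne_top : (∑' k : ℕ, ((k + 1 : ℝ≥0∞)⁻¹) ^ 2) ≠ ⊤ := by
  have h : Summable (fun n : ℕ => 1 / ((n : ℝ)) ^ 2) := Real.summable_one_div_nat_pow.2 one_lt_two
  have h' := (summable_nat_add_iff 1).2 h
  have h2 := h'.tsum_ofReal_ne_top
  convert h2 using 3 with k
  rw [one_div, ENNReal.ofReal_inv_of_pos (by positivity), ENNReal.ofReal_pow (by positivity),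
    ENNReal.ofReal_natCast, ENNReal.inv_pow]
  push_cast
  rfl

theorem key_all {G : Type*} [Group G] (ℓ : G → ℕ) (D d : ℕ)
    (hB : ∀ k, ∀ φ : G → ℝ≥0∞, (∀ g, φ g ≠ 0 → ℓ g = k) → ∀ ψ : G → ℝ≥0∞,
      ((k + 1 : ℕ) : ℝ≥0∞) ^ 2 * ∑' g, econv φ ψ g ^ 2 ≤
        ((D * (k + 1) ^ (2 * d) : ℕ) : ℝ≥0∞) * ((∑' g, φ g ^ 2) * ∑' g, ψ g ^ 2))
    (φ ψ : G → ℝ≥0∞) :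
    ∑' g, econv φ ψ g ^ 2 ≤ (∑' k : ℕ, ((k + 1 : ℝ≥0∞)⁻¹) ^ 2) * D *
      ((∑' g, φ g ^ 2 * (1 + (ℓ g : ℝ≥0∞)) ^ (2 * d)) * ∑' g, ψ g ^ 2) := by
  set φk : ℕ → G → ℝ≥0∞ := fun l x => if ℓ x = l then φ x else 0 with hφk
  have h1 : ∀ g, econv φ ψ g = ∑' k, econv (φk k) ψ g := by
    intro g
    unfold econv
    rw [ENNReal.tsum_comm]
    refine tsum_congr fun x => ?_
    rw [tsum_eq_single (ℓ x)]
    · simp [hφk]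
    · intro b hb
      simp [hφk, hb.symm]
  have h2 : ∀ g, econv φ ψ g ^ 2 ≤ (∑' k : ℕ, ((k + 1 : ℝ≥0∞)⁻¹) ^ 2) *
      ∑' k : ℕ, ((k + 1 : ℕ) : ℝ≥0∞) ^ 2 * econv (φk k) ψ g ^ 2 := by
    intro g
    have := cs_tsum (fun k : ℕ => (k + 1 : ℝ≥0∞)⁻¹)
      (fun k : ℕ => (k + 1 : ℝ≥0∞) * econv (φk k) ψ g)
    simp only [mul_pow] at this
    refine le_trans (le_of_eq ?_) (this.trans (le_of_eq (by push_cast; rfl)))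
    rw [h1]
    congr 2
    funext k
    rw [← mul_assoc, ENNReal.inv_mul_cancel (by simp) (by finiteness), one_mul]
  calc _ ≤ ∑' g, (∑' k : ℕ, ((k + 1 : ℝ≥0∞)⁻¹) ^ 2) *
      ∑' k : ℕ, ((k + 1 : ℕ) : ℝ≥0∞) ^ 2 * econv (φk k) ψ g ^ 2 := ENNReal.tsum_le_tsum h2
    _ = (∑' k : ℕ, ((k + 1 : ℝ≥0∞)⁻¹) ^ 2) *
      ∑' k : ℕ, ((k + 1 : ℕ) : ℝ≥0∞) ^ 2 * ∑' g, econv (φk k) ψ g ^ 2 := by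
        rw [ENNReal.tsum_mul_left, ENNReal.tsum_comm]
        simp_rw [ENNReal.tsum_mul_left]
    _ ≤ (∑' k : ℕ, ((k + 1 : ℝ≥0∞)⁻¹) ^ 2) *
      ∑' k : ℕ, ((D * (k + 1) ^ (2 * d) : ℕ) : ℝ≥0∞) *
        ((∑' g, φk k g ^ 2) * ∑' g, ψ g ^ 2) := by
        refine mul_le_mul' le_rfl (ENNReal.tsum_le_tsum fun k => hB k _ (fun g hg => ?_) ψ)
        by_contra hne
        simp [hφk, hne] at hg
    _ = _ := by
        rw [mul_assoc]
        congr 1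
        simp_rw [← mul_assoc]
        rw [ENNReal.tsum_mul_right]
        congr 1
        simp_rw [← ENNReal.tsum_mul_left]
        rw [ENNReal.tsum_comm]
        refine tsum_congr fun g => ?_
        rw [tsum_eq_single (ℓ g)]
        · simp only [hφk, if_true]
          push_cast
          rw [add_comm (1 : ℝ≥0∞)]
          ring
        · intro b hb
          simp [hφk, hb.symm]

theorem poly_bound (P : Polynomial ℝ) :
    ∃ D d : ℕ, ∀ n : ℕ, P.eval (n : ℝ) ≤ ((D * (n + 1) ^ d : ℕ) : ℝ) := by
  induction P using Polynomial.induction_on' with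
  | add p q hp hq =>
    obtain ⟨D, d, h⟩ := hp
    obtain ⟨D', d', h'⟩ := hq
    refine ⟨D + D', d + d', fun n => ?_⟩
    rw [Polynomial.eval_add]
    refine (add_le_add (h n) (h' n)).trans ?_
    norm_cast
    rw [add_mul]
    exact add_le_add
      (Nat.mul_le_mul_left _ (Nat.pow_le_pow_right (by omega) (by omega)))
      (Nat.mul_le_mul_left _ (Nat.pow_le_pow_right (by omega) (by omega)))
  | monomial m a =>
    refine ⟨⌈|a|⌉₊, m, fun n => ?_⟩
    rw [Polynomial.eval_monomial]
    push_cast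
    have h1 : a ≤ (⌈|a|⌉₊ : ℝ) := (le_abs_self a).trans (Nat.le_ceil _)
    have h2 : (n : ℝ) ^ m ≤ ((n : ℝ) + 1) ^ m := by gcongr; simp
    exact mul_le_mul h1 h2 (by positivity) (by positivity)

theorem wl_exists {G : Type*} [Group G] (X : Set G) (hX : Subgroup.closure X = ⊤) (g : G) :
    ∃ w : List G, (∀ a ∈ w, a ∈ X ∪ X⁻¹) ∧ w.length = wordLength (X ∪ X⁻¹) g ∧ w.prod = g := by
  have hne : {N : ℕ | ∃ w : List G, (∀ a ∈ w, a ∈ X ∪ X⁻¹) ∧ w.length = N ∧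
      w.prod = g}.Nonempty := by
    have hg : g ∈ Submonoid.closure (X ∪ X⁻¹) := by
      rw [← Subgroup.closure_toSubmonoid, hX]
      trivial
    obtain ⟨w, hw, hp⟩ := Submonoid.exists_list_of_mem_closure hg
    exact ⟨w.length, w, hw, rfl, hp⟩
  exact Nat.sInf_mem hne

theorem wl_le {G : Type*} [Group G] (Y : Set G) (w : List G) (hw : ∀ a ∈ w, a ∈ Y) :
    wordLength Y w.prod ≤ w.length := Nat.sInf_le ⟨w, hw, rfl, rfl⟩

theorem wl_mul {G : Type*} [Group G] (X : Set G) (hX : Subgroup.closure X = ⊤) (g h : G) :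
    wordLength (X ∪ X⁻¹) (g * h) ≤ wordLength (X ∪ X⁻¹) g + wordLength (X ∪ X⁻¹) h := by
  obtain ⟨w, hw, hl, hp⟩ := wl_exists X hX g
  obtain ⟨w', hw', hl', hp'⟩ := wl_exists X hX h
  have := wl_le (X ∪ X⁻¹) (w ++ w') (by
    intro a ha
    rcases List.mem_append.1 ha with h | h
    exacts [hw a h, hw' a h])
  rwa [List.prod_append, hp, hp', List.length_append, hl, hl'] at this

theorem wl_inv_le {G : Type*} [Group G] (X : Set G) (hX : Subgroup.closure X = ⊤) (g : G) :
    wordLength (X ∪ X⁻¹) g⁻¹ ≤ wordLength (X ∪ X⁻¹) g := by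
  obtain ⟨w, hw, hl, hp⟩ := wl_exists X hX g
  have := wl_le (X ∪ X⁻¹) (w.map (·⁻¹)).reverse (by
    intro a ha
    simp only [List.mem_reverse, List.mem_map] at ha
    obtain ⟨b, hb, rfl⟩ := ha
    have := hw b hb
    simp only [Set.mem_union, Set.mem_inv, inv_inv] at this ⊢
    exact this.symm)
  rwa [← List.prod_inv_reverse, hp, List.length_reverse, List.length_map, hl] at this

theorem transfer {G : Type*} [Group G] (ℓ : G → ℕ) (Z : ℝ≥0∞) (hZ : Z ≠ ⊤) (d : ℕ)
    (h : ∀ φ ψ : G → ℝ≥0∞, ∑' g, econv φ ψ g ^ 2 ≤ Z *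
      ((∑' g, φ g ^ 2 * (1 + (ℓ g : ℝ≥0∞)) ^ (2 * d)) * ∑' g, ψ g ^ 2)) :
    RapidDecay ℓ := by
  refine ⟨Real.sqrt (Z.toReal + 1), by positivity, d, by positivity, fun φ ψ => ?_⟩
  unfold l2Norm sobolevNorm
  rw [← Real.sqrt_mul (by positivity), ← Real.sqrt_mul (by positivity)]
  refine Real.sqrt_le_sqrt ?_
  have e0 : ∀ f : G → ℂ, ∑' g, ‖f g‖ ^ 2 = (∑' g, ‖f g‖ₑ ^ 2).toReal := by
    intro f
    rw [ENNReal.tsum_toReal_eq (fun g => by finiteness)]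
    simp
  have e1 : ∑' g, ‖φ g‖ ^ 2 * (1 + (ℓ g : ℝ)) ^ (2 * (d : ℝ)) =
      (∑' g, ‖φ g‖ₑ ^ 2 * (1 + (ℓ g : ℝ≥0∞)) ^ (2 * d)).toReal := by
    rw [ENNReal.tsum_toReal_eq (fun g => by finiteness)]
    refine tsum_congr fun g => ?_
    rw [show (2 * (d : ℝ)) = ((2 * d : ℕ) : ℝ) by push_cast; rfl, Real.rpow_natCast]
    rw [ENNReal.toReal_mul, ENNReal.toReal_pow, ENNReal.toReal_pow,
      ENNReal.toReal_add (by simp) (by simp)]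
    simp
  have f1 : ∑' g, ‖φ g‖ₑ ^ 2 * (1 + (ℓ g : ℝ≥0∞)) ^ (2 * d) ≠ ⊤ := by
    rw [tsum_eq_sum (s := φ.support) (fun b hb => by
      rw [Finsupp.notMem_support_iff] at hb; simp [hb])]
    refine ENNReal.sum_ne_top.2 fun g _ => by finiteness
  have f2 : ∑' g, ‖ψ g‖ₑ ^ 2 ≠ ⊤ := by
    rw [tsum_eq_sum (s := ψ.support) (fun b hb => by
      rw [Finsupp.notMem_support_iff] at hb; simp [hb])]
    refine ENNReal.sum_ne_top.2 fun g _ => by finiteness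
  have hc : ∀ g, ‖conv φ ψ g‖ₑ ≤ econv (fun g => ‖φ g‖ₑ) (fun g => ‖ψ g‖ₑ) g := by
    intro g
    unfold conv econv Finsupp.sum
    refine (enorm_sum_le _ _).trans ?_
    simp_rw [enorm_mul]
    exact ENNReal.sum_le_tsum _
  rw [e0, e0, e1]
  have h3 := (ENNReal.tsum_le_tsum fun g => pow_le_pow_left' (hc g) 2).trans (h _ _)
  have h4 := ENNReal.toReal_mono (by finiteness) h3
  refine h4.trans ?_
  rw [ENNReal.toReal_mul, ENNReal.toReal_mul, mul_assoc]
  gcongr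
  simp

end helpers

/-- **Theorem.** Conditions D1 and D2 on a set `𝒬` of permissible factorisations imply
the rapid decay property with respect to the word length. -/
theorem rapidDecay_of_D1_D2
    {G : Type*} [Group G] (X : Set G) (hXfin : X.Finite)
    (hXgen : Subgroup.closure X = ⊤)
    (ℓ : G → ℕ) (hℓ : ∀ g, ℓ g = wordLength (X ∪ X⁻¹) g)
    (𝒬 : Set (G × G))
    -- Condition D1
    (P₁ : Polynomial ℝ) (hP₁ : ∀ i, 0 ≤ P₁.coeff i)
    (hD1 : ∀ k l : ℕ, ∀ g : G, ℓ g = k + l →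
      (FactSet ℓ 𝒬 k l g).Finite ∧
      ((FactSet ℓ 𝒬 k l g).ncard : ℝ) ≤ P₁.eval ((min k l : ℕ) : ℝ))
    -- Condition D2
    (K : ℕ) (hK : 1 ≤ K)
    (P₂ P₃ : Polynomial ℝ) (hP₂ : ∀ i, 0 ≤ P₂.coeff i) (hP₃ : ∀ i, 0 ≤ P₃.coeff i)
    (S : G → ℕ → ℕ → Set (G × G × G))
    (hcover : ∀ (g : G) (k l : ℕ) (g₁ g₂ : G), g = g₁ * g₂ → ℓ g₁ = k → ℓ g₂ = l →
      ∃ f₁ gmid f₂ h₁ h₂ : G, ∃ p₁ p₂ : ℕ,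
        (f₁, gmid, f₂) ∈ S g k l ∧ p₁ ≤ k ∧ p₂ ≤ l ∧
        p₁ ≤ K * min k l ∧ p₂ ≤ K * min k l ∧
        g = f₁ * gmid * f₂ ∧ gmid = h₁ * h₂ ∧
        (f₁, h₁) ∈ FactSet ℓ 𝒬 (k - p₁) p₁ g₁ ∧
        (h₂, f₂) ∈ FactSet ℓ 𝒬 p₂ (l - p₂) g₂)
    (hS : ∀ (g : G) (k l : ℕ), (S g k l).Finite ∧
      ((S g k l).ncard : ℝ) ≤ P₂.eval ((min k l : ℕ) : ℝ))
    (hT : ∀ k l : ℕ, (TSet S k l).Finite ∧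
      ((TSet S k l).ncard : ℝ) ≤ P₃.eval ((min k l : ℕ) : ℝ)) :
    RapidDecay ℓ := by
  have hsub : ∀ g h, ℓ (g * h) ≤ ℓ g + ℓ h := by
    intro g h
    simp only [hℓ]
    exact wl_mul X hXgen g h
  have hinv : ∀ g, ℓ g⁻¹ = ℓ g := by
    intro g
    simp only [hℓ]
    refine le_antisymm (wl_inv_le X hXgen g) ?_
    simpa using wl_inv_le X hXgen g⁻¹
  obtain ⟨D₁, d₁, hb1⟩ := poly_bound P₁
  obtain ⟨D₂, d₂, hb2⟩ := poly_bound P₂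
  obtain ⟨D₃, d₃, hb3⟩ := poly_bound P₃
  -- numerical bounds
  have m1 : ∀ k l g n, ℓ g = k + l → min k l ≤ n → (FactSet ℓ 𝒬 k l g).Finite ∧
      (FactSet ℓ 𝒬 k l g).ncard ≤ D₁ * (n + 1) ^ d₁ := by
    intro k l g n hg hn
    refine ⟨(hD1 k l g hg).1, ?_⟩
    have h1 : (FactSet ℓ 𝒬 k l g).ncard ≤ D₁ * (min k l + 1) ^ d₁ := by
      exact_mod_cast (hD1 k l g hg).2.trans (hb1 _)
    refine h1.trans (Nat.mul_le_mul_left _ (Nat.pow_le_pow_left (by omega) _))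
  have m2 : ∀ g k l, (S g k l).ncard ≤ D₂ * (k + 1) ^ d₂ := by
    intro g k l
    have h1 : (S g k l).ncard ≤ D₂ * (min k l + 1) ^ d₂ := by
      exact_mod_cast (hS g k l).2.trans (hb2 _)
    refine h1.trans (Nat.mul_le_mul_left _ (Nat.pow_le_pow_left (by omega) _))
  have m3 : ∀ k l, (TSet S k l).ncard ≤ D₃ * (k + 1) ^ d₃ := by
    intro k l
    have h1 : (TSet S k l).ncard ≤ D₃ * (min k l + 1) ^ d₃ := by
      exact_mod_cast (hT k l).2.trans (hb3 _)
    refine h1.trans (Nat.mul_le_mul_left _ (Nat.pow_le_pow_left (by omega) _))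
  have main := key_all ℓ (2 * ((K + 1) ^ 4 * D₂ * D₃ * (D₁ * (K + 1) ^ d₁) ^ 2))
    (7 + d₂ + d₃ + 2 * d₁) (by
    intro k φ hφ ψ
    have hk := key_k ℓ hinv hsub k
      (((K * k + 1) ^ 4 * (D₂ * (k + 1) ^ d₂) * (D₃ * (k + 1) ^ d₃) *
        (D₁ * (K * k + 1) ^ d₁) ^ 2 : ℕ) : ℝ≥0∞) φ hφ (by
      intro l ψ hψ
      have hKk : K * min k l ≤ K * k := Nat.mul_le_mul_left _ (min_le_left _ _)
      refine key_kl ℓ 𝒬 k l (K * k) _ _ _ ?_ ?_ (fun g => S g k l) (fun g => (hS g k l).1)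
        (fun g => m2 g k l) (TSet S k l) (hT k l).1 (m3 k l) ?_ ?_ φ ψ hφ hψ
      · intro p hp hpk g hg
        exact m1 _ _ g _ (by omega) (by omega)
      · intro p hp hpl g hg
        exact m1 _ _ g _ (by omega) (by omega)
      · rintro g ⟨f, m, f'⟩ hs
        exact ⟨g, f, f', hs⟩
      · intro g g₁ g₂ hg h1 h2
        obtain ⟨f₁, m, f₂, e₁, e₂, p₁, p₂, hs, hp1, hp2, hq1, hq2, hr⟩ :=
          hcover g k l g₁ g₂ hg h1 h2
        exact ⟨f₁, m, f₂, e₁, e₂, p₁, p₂, hs, hp1, hp2, hq1.trans hKk, hq2.trans hKk, hr⟩) ψ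
    refine (mul_le_mul' le_rfl hk).trans ?_
    rw [← mul_assoc, ← mul_assoc]
    refine mul_le_mul' ?_ le_rfl
    norm_cast
    have hK1 : K * k + 1 ≤ (K + 1) * (k + 1) := by nlinarith
    have h21 : 2 * k + 1 ≤ 2 * (k + 1) := by omega
    calc (k + 1) ^ 2 * (2 * k + 1) * ((K * k + 1) ^ 4 * (D₂ * (k + 1) ^ d₂) *
          (D₃ * (k + 1) ^ d₃) * (D₁ * (K * k + 1) ^ d₁) ^ 2)
        ≤ (k + 1) ^ 2 * (2 * (k + 1)) * (((K + 1) * (k + 1)) ^ 4 * (D₂ * (k + 1) ^ d₂) *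
          (D₃ * (k + 1) ^ d₃) * (D₁ * ((K + 1) * (k + 1)) ^ d₁) ^ 2) := by gcongr
      _ = 2 * ((K + 1) ^ 4 * D₂ * D₃ * (D₁ * (K + 1) ^ d₁) ^ 2) *
          (k + 1) ^ (7 + d₂ + d₃ + 2 * d₁) := by
          generalize k + 1 = u
          generalize K + 1 = v
          rw [mul_pow v u d₁]
          ring
      _ ≤ _ := Nat.mul_le_mul_left _ (Nat.pow_le_pow_right (by omega) (by omega)))
  exact transfer ℓ _ (ENNReal.mul_ne_top zeta_ne_top (by finiteness)) _ main

end ArtinRD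
end

section
/- Let G be an Artin group of large type with standard generators x_1,...,x_n and A = {x_1^{±1},...,x_n^{±1}}. If w is a word over A and a ∈ A is a letter such that the word wa is geodesic, then for every integer k ≥ 1 the word w a^k is geodesic. -/
namespace ArtinRD

/-- The alternating product `xyxy...` with `m` factors, starting with `x`. -/
def altProd {G : Type*} [Monoid G] : ℕ → G → G → G
  | 0, _, _ => 1
  | n + 1, x, y => x * altProd n y x

/-- The Artin relators determined by a Coxeter-type matrix `M` (`⊤` meaning `∞`). -/
def artinRels (n : ℕ) (M : Fin n → Fin n → ℕ∞) : Set (FreeGroup (Fin n)) :=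
  {r | ∃ i j : Fin n, i ≠ j ∧ ∃ m : ℕ, M i j = (m : ℕ∞) ∧
    r = altProd m (FreeGroup.of i) (FreeGroup.of j) *
        (altProd m (FreeGroup.of j) (FreeGroup.of i))⁻¹}

/-- The Artin group associated to the matrix `M`. -/
abbrev ArtinGroup (n : ℕ) (M : Fin n → Fin n → ℕ∞) : Type := PresentedGroup (artinRels n M)

/-- The standard generator `x_i` of the Artin group. -/
def gen (n : ℕ) (M : Fin n → Fin n → ℕ∞) (i : Fin n) : ArtinGroup n M := PresentedGroup.of i

/-- The set `A = {x_1^{±1}, ..., x_n^{±1}}` of standard letters. -/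
def genSet (n : ℕ) (M : Fin n → Fin n → ℕ∞) : Set (ArtinGroup n M) :=
  {g | ∃ i : Fin n, g = gen n M i ∨ g = (gen n M i)⁻¹}

/-- The word length on an Artin group with respect to the standard letters. -/
noncomputable def ℓA (n : ℕ) (M : Fin n → Fin n → ℕ∞) : ArtinGroup n M → ℕ :=
  wordLength (genSet n M)

/-- A letter: a generator index together with a sign (`true` = positive). -/
abbrev Letter (n : ℕ) := Fin n × Bool

/-- The group element corresponding to a letter. -/
def toGen (n : ℕ) (M : Fin n → Fin n → ℕ∞) (l : Letter n) : ArtinGroup n M :=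
  if l.2 then gen n M l.1 else (gen n M l.1)⁻¹

/-- The group element represented by a word over the letters. -/
def wordElt (n : ℕ) (M : Fin n → Fin n → ℕ∞) (w : List (Letter n)) : ArtinGroup n M :=
  (w.map (toGen n M)).prod

/-- A word is geodesic if its length equals the word length of the element it represents. -/
def IsGeodesic (n : ℕ) (M : Fin n → Fin n → ℕ∞) (w : List (Letter n)) : Prop :=
  wordLength (genSet n M) (wordElt n M w) = w.length

/-! ### Abstract dihedral data -/

theorem perm_apply_inv {α : Type} (f : Equiv.Perm α) (x : α) : f (f⁻¹ x) = x :=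
  f.apply_symm_apply x

theorem perm_inv_apply {α : Type} (f : Equiv.Perm α) (x : α) : f⁻¹ (f x) = x :=
  f.symm_apply_apply x

/-- A set with two permutations and a length function behaving like a dihedral Artin group. -/
structure Dih where
  S : Type
  o : S
  A : Bool → Equiv.Perm S
  l : S → ℕ
  l_o : l o = 0
  step : ∀ b z, l (A b z) = l z + 1 ∨ l z = l (A b z) + 1
  nopeak : ∀ b z, ¬ (l (A b z) < l z ∧ l ((A b)⁻¹ z) < l z)
  desc : ∀ z, z ≠ o → ∃ b, l (A b z) < l z ∨ l ((A b)⁻¹ z) < l z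
  two : ∀ b (t f : ℤ), t ≠ 0 →
    l ((A (!b) ^ t) ((A b ^ f) o)) < l (A b ((A (!b) ^ t) ((A b ^ f) o))) ∧
    l ((A (!b) ^ t) ((A b ^ f) o)) < l ((A b)⁻¹ ((A (!b) ^ t) ((A b ^ f) o)))

namespace Dih

variable (D : Dih)

theorem step' (b : Bool) (z : D.S) :
    D.l ((D.A b)⁻¹ z) = D.l z + 1 ∨ D.l z = D.l ((D.A b)⁻¹ z) + 1 := by
  have := D.step b ((D.A b)⁻¹ z)
  rw [perm_apply_inv] at this
  omega

/-- Once going up, always going up. -/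
theorem up_pow (b : Bool) (z : D.S) (h : D.l z < D.l (D.A b z)) (n : ℕ) :
    D.l ((D.A b ^ n) z) = D.l z + n ∧ D.l ((D.A b ^ (n + 1)) z) = D.l z + (n + 1) := by
  induction n with
  | zero =>
    have := D.step b z
    simp
    omega
  | succ n ih =>
    refine ⟨ih.2, ?_⟩
    have h1 := D.step b ((D.A b ^ (n + 1)) z)
    have h2 := D.nopeak b ((D.A b ^ (n + 1)) z)
    have e1 : D.A b ((D.A b ^ (n + 1)) z) = (D.A b ^ (n + 1 + 1)) z := by
      rw [pow_succ' _ (n + 1)]; rfl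
    have e2 : (D.A b)⁻¹ ((D.A b ^ (n + 1)) z) = (D.A b ^ n) z := by
      rw [pow_succ']; simp
    rw [e1] at h1 h2
    rw [e2] at h2
    omega

theorem down_pow (b : Bool) (z : D.S) (h : D.l z < D.l ((D.A b)⁻¹ z)) (n : ℕ) :
    D.l (((D.A b)⁻¹ ^ n) z) = D.l z + n ∧ D.l (((D.A b)⁻¹ ^ (n + 1)) z) = D.l z + (n + 1) := by
  induction n with
  | zero =>
    have := D.step' b z
    simp only [pow_zero, zero_add, pow_one, Equiv.Perm.coe_one, id_eq, add_zero, true_and]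
    omega
  | succ n ih =>
    refine ⟨ih.2, ?_⟩
    have h1 := D.step' b (((D.A b)⁻¹ ^ (n + 1)) z)
    have h2 := D.nopeak b (((D.A b)⁻¹ ^ (n + 1)) z)
    have e1 : (D.A b)⁻¹ (((D.A b)⁻¹ ^ (n + 1)) z) = ((D.A b)⁻¹ ^ (n + 1 + 1)) z := by
      rw [pow_succ' _ (n + 1)]; rfl
    have e2 : (D.A b) (((D.A b)⁻¹ ^ (n + 1)) z) = ((D.A b)⁻¹ ^ n) z := by
      rw [pow_succ', Equiv.Perm.mul_apply, perm_apply_inv]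
    rw [e1] at h1 h2
    rw [e2] at h2
    omega

theorem l_zpow (b : Bool) (z : D.S) (h : D.l z < D.l (D.A b z)) (h' : D.l z < D.l ((D.A b)⁻¹ z))
    (t : ℤ) : D.l ((D.A b ^ t) z) = D.l z + t.natAbs := by
  obtain ⟨n, rfl | rfl⟩ := Int.eq_nat_or_neg t
  · simpa using (D.up_pow b z h n).1
  · simpa using (D.down_pow b z h' n).1

theorem exists_e (b : Bool) (z : D.S) : ∃ k : ℤ, ∀ t : ℤ,
    D.l ((D.A b ^ t) ((D.A b ^ (-k)) z)) = D.l ((D.A b ^ (-k)) z) + t.natAbs := by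
  have hne : (Set.range fun k : ℤ => D.l ((D.A b ^ (-k)) z)).Nonempty := Set.range_nonempty _
  obtain ⟨k, hk⟩ := Nat.sInf_mem hne
  have hmin : ∀ k' : ℤ, D.l ((D.A b ^ (-k)) z) ≤ D.l ((D.A b ^ (-k')) z) := by
    intro k'
    simp only at hk
    rw [hk]
    exact Nat.sInf_le ⟨k', rfl⟩
  refine ⟨k, D.l_zpow b _ ?_ ?_⟩
  · have h1 := D.step b ((D.A b ^ (-k)) z)
    have h2 := hmin (k - 1)
    have : (D.A b ^ (-(k - 1))) z = D.A b ((D.A b ^ (-k)) z) := by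
      rw [show -(k - 1) = 1 + -k by ring, zpow_add]; simp
    rw [this] at h2
    omega
  · have h1 := D.step' b ((D.A b ^ (-k)) z)
    have h2 := hmin (k + 1)
    have : (D.A b ^ (-(k + 1))) z = (D.A b)⁻¹ ((D.A b ^ (-k)) z) := by
      rw [show -(k + 1) = -1 + -k by ring, zpow_add]; simp
    rw [this] at h2
    omega

/-- The trailing exponent. -/
noncomputable def e (b : Bool) (z : D.S) : ℤ := (D.exists_e b z).choose

/-- The element with the trailing power removed. -/
noncomputable def r (b : Bool) (z : D.S) : D.S := (D.A b ^ (-(D.e b z))) z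

theorem l_r_zpow (b : Bool) (z : D.S) (t : ℤ) :
    D.l ((D.A b ^ t) (D.r b z)) = D.l (D.r b z) + t.natAbs := (D.exists_e b z).choose_spec t

theorem zpow_zpow (b : Bool) (s t : ℤ) (z : D.S) :
    (D.A b ^ s) ((D.A b ^ t) z) = (D.A b ^ (s + t)) z := by
  rw [zpow_add]; rfl

theorem A_e_r (b : Bool) (z : D.S) : (D.A b ^ (D.e b z)) (D.r b z) = z := by
  rw [r, zpow_zpow]; simp

theorem l_eq (b : Bool) (z : D.S) : D.l z = D.l (D.r b z) + (D.e b z).natAbs := by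
  rw [← l_r_zpow, A_e_r]

theorem e_unique (b : Bool) (z : D.S) (k : ℤ)
    (h : ∀ t : ℤ, D.l ((D.A b ^ t) ((D.A b ^ (-k)) z)) = D.l ((D.A b ^ (-k)) z) + t.natAbs) :
    D.e b z = k := by
  have h1 := D.l_r_zpow b z (D.e b z - k)
  have h2 := h (k - D.e b z)
  rw [r, zpow_zpow] at h1
  rw [zpow_zpow] at h2
  rw [show D.e b z - k + -(D.e b z) = -k by ring] at h1
  rw [show k - D.e b z + -k = -(D.e b z) by ring] at h2
  omega

theorem e_zpow (b : Bool) (t : ℤ) (z : D.S) : D.e b ((D.A b ^ t) z) = D.e b z + t := by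
  apply e_unique
  intro s
  rw [zpow_zpow _ _ _ t, show -(D.e b z + t) + t = -(D.e b z) by ring]
  exact D.l_r_zpow b z s

theorem r_zpow (b : Bool) (t : ℤ) (z : D.S) : D.r b ((D.A b ^ t) z) = D.r b z := by
  rw [r, e_zpow, zpow_zpow, r, show -(D.e b z + t) + t = -(D.e b z) by ring]

theorem e_r (b : Bool) (z : D.S) : D.e b (D.r b z) = 0 := by
  rw [r, e_zpow]; ring

theorem r_of_e (b : Bool) (z : D.S) (h : D.e b z = 0) : D.r b z = z := by
  rw [r, h]; simp

theorem e_eq_zero (b : Bool) (z : D.S) (h : D.l z < D.l (D.A b z))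
    (h' : D.l z < D.l ((D.A b)⁻¹ z)) : D.e b z = 0 := by
  apply e_unique
  simpa using D.l_zpow b z h h'

theorem e_o (b : Bool) : D.e b D.o = 0 := by
  have h1 := D.step b D.o
  have h2 := D.step' b D.o
  have := D.l_o
  apply e_eq_zero <;> omega

theorem e_two (b : Bool) (t f : ℤ) (ht : t ≠ 0) : D.e b ((D.A (!b) ^ t) ((D.A b ^ f) D.o)) = 0 :=
  D.e_eq_zero _ _ (D.two b t f ht).1 (D.two b t f ht).2

theorem e_one (b : Bool) (t : ℤ) : D.e b ((D.A (!b) ^ t) D.o) = 0 := by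
  by_cases ht : t = 0
  · subst ht; simpa using D.e_o b
  · simpa using D.e_two b t 0 ht

theorem eq_o (b : Bool) (z : D.S) (h : D.e b z = 0) (h' : D.e (!b) z = 0) : z = D.o := by
  by_contra hz
  obtain ⟨c, hc⟩ := D.desc z hz
  have he : D.e c z = 0 := by cases b <;> cases c <;> simp_all
  have h1 := D.l_r_zpow c z 1
  have h2 := D.l_r_zpow c z (-1)
  rw [D.r_of_e c z he] at h1 h2
  rw [zpow_one] at h1
  rw [zpow_neg_one] at h2
  simp only [Int.natAbs_one, Int.natAbs_neg] at h1 h2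
  omega

theorem l_r_lt (b : Bool) (z : D.S) (h : D.e b z ≠ 0) : D.l (D.r b z) < D.l z := by
  have := D.l_eq b z
  omega

theorem ne_o_of_e (b : Bool) (z : D.S) (h : D.e b z ≠ 0) : z ≠ D.o := by
  rintro rfl
  exact h (D.e_o b)

end Dih
/-! ### Systems of dihedral data glued along cyclic pieces -/

/-- Points, lines with two points each, dihedral data on each line, and evaluations. -/
structure Sys where
  I : Type
  P : Type
  pt : P → Bool → I
  D : P → Dih
  pt_ne : ∀ p b, pt p (!b) ≠ pt p b
  line : ∀ p q b c c', p ≠ q → pt p b = pt q c → pt p (!b) ≠ pt q c'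
  Γ : Type
  grp : Group Γ
  γ : I → Γ
  ev : ∀ p, (D p).S → Γ
  ev_o : ∀ p, ev p (D p).o = 1
  ev_A : ∀ p b z, ev p ((D p).A b z) = ev p z * γ (pt p b)

attribute [instance] Sys.grp

/-- Raw normal forms. -/
inductive Node (Q : Sys) : Type where
  | one : Node Q
  | cyc (x : Node Q) (i : Q.I) (t : ℤ) : Node Q
  | dih (x : Node Q) (p : Q.P) (z : (Q.D p).S) : Node Q

namespace Node

variable {Q : Sys}

theorem pt_inj {p : Q.P} {b c : Bool} (h : Q.pt p b = Q.pt p c) : b = c := by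
  have h1 := Q.pt_ne p true
  have h2 := Q.pt_ne p false
  cases b <;> cases c <;> simp_all

/-- Length of a raw normal form. -/
def len : Node Q → ℕ
  | one => 0
  | cyc x _ t => len x + t.natAbs
  | dih x p z => len x + (Q.D p).l z

/-- Evaluation of a raw normal form. -/
def eval : Node Q → Q.Γ
  | one => 1
  | cyc x i t => eval x * Q.γ i ^ t
  | dih x p z => eval x * Q.ev p z

open Classical in
/-- Trailing exponent with respect to a point. -/
noncomputable def eps : Node Q → Q.I → ℤ
  | one, _ => 0
  | cyc _ i t, j => if i = j then t else 0
  | dih _ q z, j => if hb : ∃ b, Q.pt q b = j then (Q.D q).e hb.choose z else 0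

open Classical in
/-- Trailing part with respect to a line. -/
noncomputable def h : Node Q → (p : Q.P) → (Q.D p).S
  | one, p => (Q.D p).o
  | cyc x i t, p =>
    if hb : ∃ b, Q.pt p b = i then ((Q.D p).A hb.choose ^ t) (h x p) else (Q.D p).o
  | dih _ q z, p =>
    if hq : q = p then hq ▸ z
    else if hb : ∃ bc : Bool × Bool, Q.pt p bc.1 = Q.pt q bc.2 then
      ((Q.D p).A hb.choose.1 ^ (Q.D q).e hb.choose.2 z) (Q.D p).o
    else (Q.D p).o

theorem eps_cyc_self (x : Node Q) (i : Q.I) (t : ℤ) : eps (cyc x i t) i = t := by simp [eps]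

theorem eps_cyc_ne (x : Node Q) {i j : Q.I} (t : ℤ) (hij : i ≠ j) : eps (cyc x i t) j = 0 := by
  simp [eps, hij]

theorem eps_dih (x : Node Q) (p : Q.P) (z : (Q.D p).S) (b : Bool) :
    eps (dih x p z) (Q.pt p b) = (Q.D p).e b z := by
  have hb : ∃ c, Q.pt p c = Q.pt p b := ⟨b, rfl⟩
  rw [eps, dif_pos hb, pt_inj hb.choose_spec]

theorem eps_dih_ne (x : Node Q) (p : Q.P) (z : (Q.D p).S) (j : Q.I) (hj : ∀ b, Q.pt p b ≠ j) :
    eps (dih x p z) j = 0 := by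
  rw [eps, dif_neg]
  rintro ⟨b, hb⟩
  exact hj b hb

theorem h_cyc (x : Node Q) (p : Q.P) (b : Bool) (t : ℤ) :
    h (cyc x (Q.pt p b) t) p = ((Q.D p).A b ^ t) (h x p) := by
  have hb : ∃ c, Q.pt p c = Q.pt p b := ⟨b, rfl⟩
  rw [h, dif_pos hb, pt_inj hb.choose_spec]

theorem h_cyc_ne (x : Node Q) (i : Q.I) (p : Q.P) (t : ℤ) (hj : ∀ b, Q.pt p b ≠ i) :
    h (cyc x i t) p = (Q.D p).o := by
  rw [h, dif_neg]
  rintro ⟨b, hb⟩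
  exact hj b hb

theorem h_dih (x : Node Q) (p : Q.P) (z : (Q.D p).S) : h (dih x p z) p = z := by
  simp [h]

theorem share_unique {p q : Q.P} (hpq : q ≠ p) {b c b' c' : Bool} (h1 : Q.pt p b = Q.pt q c)
    (h2 : Q.pt p b' = Q.pt q c') : b' = b ∧ c' = c := by
  have : b' = b := by
    by_contra hne
    have hb : b' = !b := by cases b <;> cases b' <;> simp_all
    subst hb
    exact Q.line p q b c c' (Ne.symm hpq) h1 h2
  subst this
  exact ⟨rfl, pt_inj (h2.symm.trans h1)⟩

theorem h_dih_share (x : Node Q) {p q : Q.P} (z : (Q.D q).S) (hpq : q ≠ p) {b c : Bool}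
    (hbc : Q.pt p b = Q.pt q c) :
    h (dih x q z) p = ((Q.D p).A b ^ (Q.D q).e c z) (Q.D p).o := by
  have hb : ∃ bc : Bool × Bool, Q.pt p bc.1 = Q.pt q bc.2 := ⟨(b, c), hbc⟩
  have := share_unique hpq hbc hb.choose_spec
  rw [h, dif_neg hpq, dif_pos hb, this.1, this.2]

theorem h_dih_ne (x : Node Q) {p q : Q.P} (z : (Q.D q).S)
    (hbc : ∀ b c, Q.pt p b ≠ Q.pt q c) : h (dih x q z) p = (Q.D p).o := by
  have hpq : q ≠ p := by rintro rfl; exact hbc true true rfl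
  rw [h, dif_neg hpq, dif_neg]
  rintro ⟨⟨b, c⟩, hb⟩
  exact hbc b c hb

/-- Valid normal forms. -/
def Valid : Node Q → Prop
  | one => True
  | cyc x i t => Valid x ∧ t ≠ 0 ∧ eps x i = 0 ∧
      ∀ p b, Q.pt p b = i → (Q.D p).e (!b) (((Q.D p).A b ^ t) (h x p)) = 0
  | dih x p z => Valid x ∧ (∀ b, eps x (Q.pt p b) = 0) ∧ ∀ b, (Q.D p).e b z ≠ 0

theorem e_h (x : Node Q) (hx : Valid x) (p : Q.P) (b : Bool) :
    (Q.D p).e b (h x p) = eps x (Q.pt p b) := by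
  induction x with
  | one => simp only [h, eps]; exact Dih.e_o _ _
  | cyc x i t ih =>
    obtain ⟨hv, ht, he, hc⟩ := hx
    by_cases hi : ∃ c, Q.pt p c = i
    · obtain ⟨c, rfl⟩ := hi
      rw [h_cyc]
      by_cases hbc : b = c
      · subst hbc
        rw [Dih.e_zpow, ih hv, he, eps_cyc_self, zero_add]
      · have hb : b = !c := by cases b <;> cases c <;> simp_all
        subst hb
        rw [hc p c rfl, eps_cyc_ne]
        exact (Q.pt_ne p c).symm
    · push Not at hi
      rw [h_cyc_ne _ _ _ _ hi, Dih.e_o, eps_cyc_ne]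
      exact (hi b).symm
  | dih x q z ih =>
    obtain ⟨hv, he, hz⟩ := hx
    by_cases hpq : q = p
    · subst hpq
      rw [h_dih, eps_dih]
    · by_cases hs : ∃ b' c, Q.pt p b' = Q.pt q c
      · obtain ⟨b', c, hbc⟩ := hs
        rw [h_dih_share _ _ hpq hbc]
        by_cases hbb : b = b'
        · subst hbb
          rw [Dih.e_zpow, Dih.e_o, zero_add, hbc, eps_dih]
        · have hb : b' = !b := by cases b <;> cases b' <;> simp_all
          subst hb
          rw [Dih.e_one, eps_dih_ne]
          intro c' hc'
          have := share_unique hpq hbc hc'.symm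
          exact hbb this.1
      · push Not at hs
        rw [h_dih_ne _ _ hs, Dih.e_o, eps_dih_ne]
        exact fun c => (hs b c).symm

theorem h_eq_o (x : Node Q) (hx : Valid x) (p : Q.P) (he : ∀ b, eps x (Q.pt p b) = 0) :
    h x p = (Q.D p).o := by
  apply Dih.eq_o _ true
  · rw [e_h x hx, he]
  · rw [e_h x hx, he]

/-- The criticality condition for appending a power. -/
def Crit (y : Node Q) (i : Q.I) (t : ℤ) (p : Q.P) (b : Bool) : Prop :=
  Q.pt p b = i ∧ (Q.D p).e (!b) (((Q.D p).A b ^ t) (h y p)) ≠ 0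

open Classical in
/-- Append a power of a generator, given the gates of `y`. -/
noncomputable def pushW (g : Q.P → Node Q) (y : Node Q) (i : Q.I) (t : ℤ) : Node Q :=
  if t = 0 then y
  else if hc : ∃ pb : Q.P × Bool, Crit y i t pb.1 pb.2 then
    dih (g hc.choose.1) hc.choose.1
      (((Q.D hc.choose.1).A hc.choose.2 ^ t) (h y hc.choose.1))
  else cyc y i t

open Classical in
/-- Append a dihedral element, given the gates of `x`. -/
noncomputable def attW (g : Q.P → Node Q) (p : Q.P) (x : Node Q) (z : (Q.D p).S) : Node Q :=
  if hb : ∃ b, (Q.D p).e b z ≠ 0 ∧ (Q.D p).e (!b) z = 0 then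
    if (Q.D p).r hb.choose z = (Q.D p).o then pushW g x (Q.pt p hb.choose) ((Q.D p).e hb.choose z)
    else cyc (attW g p x ((Q.D p).r hb.choose z)) (Q.pt p hb.choose) ((Q.D p).e hb.choose z)
  else if z = (Q.D p).o then x
  else dih x p z
termination_by (Q.D p).l z
decreasing_by exact Dih.l_r_lt _ _ _ hb.choose_spec.1

open Classical in
/-- The gate of a coset. -/
noncomputable def gate : Node Q → Q.P → Node Q
  | one, _ => one
  | cyc x i t, p => if ∃ b, Q.pt p b = i then gate x p else cyc x i t
  | dih x q z, p =>
    if q = p then x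
    else if hb : ∃ c b, Q.pt p b = Q.pt q c then
      attW (gate x) q x ((Q.D q).r hb.choose z)
    else dih x q z

/-- Append a power of a generator. -/
noncomputable def push (y : Node Q) (i : Q.I) (t : ℤ) : Node Q := pushW (gate y) y i t

/-- Append a dihedral element. -/
noncomputable def att (p : Q.P) (x : Node Q) (z : (Q.D p).S) : Node Q := attW (gate x) p x z

theorem gate_cyc (x : Node Q) (p : Q.P) (b : Bool) (t : ℤ) :
    gate (cyc x (Q.pt p b) t) p = gate x p := by
  rw [gate, if_pos ⟨b, rfl⟩]

theorem gate_cyc_ne (x : Node Q) (i : Q.I) (p : Q.P) (t : ℤ) (hj : ∀ b, Q.pt p b ≠ i) :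
    gate (cyc x i t) p = cyc x i t := by
  rw [gate, if_neg]
  rintro ⟨b, hb⟩
  exact hj b hb

theorem gate_dih (x : Node Q) (p : Q.P) (z : (Q.D p).S) : gate (dih x p z) p = x := by
  simp [gate]

theorem gate_dih_share (x : Node Q) {p q : Q.P} (z : (Q.D q).S) (hpq : q ≠ p) {b c : Bool}
    (hbc : Q.pt p b = Q.pt q c) :
    gate (dih x q z) p = att q x ((Q.D q).r c z) := by
  have hb : ∃ c b, Q.pt p b = Q.pt q c := ⟨c, b, hbc⟩
  have := share_unique hpq hbc hb.choose_spec.choose_spec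
  rw [gate, if_neg hpq, dif_pos hb, this.2, att]

theorem gate_dih_ne (x : Node Q) {p q : Q.P} (z : (Q.D q).S)
    (hbc : ∀ b c, Q.pt p b ≠ Q.pt q c) : gate (dih x q z) p = dih x q z := by
  have hpq : q ≠ p := by rintro rfl; exact hbc true true rfl
  rw [gate, if_neg hpq, dif_neg]
  rintro ⟨c, b, hb⟩
  exact hbc b c hb

theorem push_zero (y : Node Q) (i : Q.I) : push y i 0 = y := by simp [push, pushW]

theorem crit_top (y : Node Q) (hy : Valid y) (i : Q.I) (hi : eps y i = 0) (t : ℤ) (ht : t ≠ 0)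
    (p : Q.P) (b : Bool) (hc : Crit y i t p b) : ∃ x f, y = cyc x (Q.pt p (!b)) f := by
  obtain ⟨rfl, hc⟩ := hc
  cases y with
  | one =>
    exfalso
    apply hc
    have := (Q.D p).e_one (!b) t
    rw [Bool.not_not] at this
    simpa only [h] using this
  | cyc x j f =>
    have hj : j ≠ Q.pt p b := by
      rintro rfl
      rw [eps_cyc_self] at hi
      exact hy.2.1 hi
    by_cases hj' : j = Q.pt p (!b)
    · subst hj'
      exact ⟨x, f, rfl⟩
    · exfalso
      apply hc
      rw [h_cyc_ne]
      · have := (Q.D p).e_one (!b) t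
        rwa [Bool.not_not] at this
      · intro c hcj
        have : c = b ∨ c = !b := by cases b <;> cases c <;> simp
        rcases this with rfl | rfl
        · exact hj hcj.symm
        · exact hj' hcj.symm
  | dih x q z =>
    exfalso
    have hpq : q ≠ p := by
      rintro rfl
      rw [eps_dih] at hi
      exact hy.2.2 b hi
    apply hc
    by_cases hs : ∃ b' c, Q.pt p b' = Q.pt q c
    · obtain ⟨b', c, hbc⟩ := hs
      rw [h_dih_share _ _ hpq hbc]
      have : b' = b ∨ b' = !b := by cases b <;> cases b' <;> simp
      rcases this with rfl | rfl
      · rw [hbc, eps_dih] at hi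
        exact absurd hi (hy.2.2 c)
      · have := (Q.D p).e_two (!b) t ((Q.D q).e c z) ht
        rwa [Bool.not_not] at this
    · push Not at hs
      rw [h_dih_ne _ _ hs]
      have := (Q.D p).e_one (!b) t
      rwa [Bool.not_not] at this

theorem crit_unique (y : Node Q) (hy : Valid y) (i : Q.I) (hi : eps y i = 0) (t : ℤ) (ht : t ≠ 0)
    (p q : Q.P) (b c : Bool) (hc : Crit y i t p b) (hc' : Crit y i t q c) : p = q ∧ b = c := by
  obtain ⟨x, f, hx⟩ := crit_top y hy i hi t ht p b hc
  obtain ⟨x', f', hx'⟩ := crit_top y hy i hi t ht q c hc'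
  have h1 : Q.pt p (!b) = Q.pt q (!c) := by
    rw [hx] at hx'
    injection hx'
  have h2 : Q.pt p b = Q.pt q c := hc.1.trans hc'.1.symm
  have hpq : p = q := by
    by_contra hne
    exact Q.line p q b c (!c) hne h2 h1
  subst hpq
  exact ⟨rfl, pt_inj h2⟩

theorem push_crit (y : Node Q) (hy : Valid y) (i : Q.I) (hi : eps y i = 0) (t : ℤ) (ht : t ≠ 0)
    (p : Q.P) (b : Bool) (hc : Crit y i t p b) :
    push y i t = dih (gate y p) p (((Q.D p).A b ^ t) (h y p)) := by
  have hb : ∃ pb : Q.P × Bool, Crit y i t pb.1 pb.2 := ⟨(p, b), hc⟩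
  have hu := crit_unique y hy i hi t ht _ _ _ _ hb.choose_spec hc
  have hu' : hb.choose = (p, b) := Prod.ext hu.1 hu.2
  rw [push, pushW, if_neg ht, dif_pos hb, hu']

theorem push_cyc (y : Node Q) (i : Q.I) (t : ℤ) (ht : t ≠ 0)
    (hc : ∀ p b, ¬ Crit y i t p b) : push y i t = cyc y i t := by
  rw [push, pushW, if_neg ht, dif_neg]
  rintro ⟨⟨p, b⟩, hb⟩
  exact hc p b hb

theorem att_o (p : Q.P) (x : Node Q) : att p x (Q.D p).o = x := by
  rw [att, attW, dif_neg, if_pos rfl]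
  rintro ⟨b, hb, -⟩
  exact hb (Dih.e_o _ b)

theorem att_both (p : Q.P) (x : Node Q) (z : (Q.D p).S) (hz : ∀ b, (Q.D p).e b z ≠ 0) :
    att p x z = dih x p z := by
  rw [att, attW, dif_neg, if_neg (Dih.ne_o_of_e _ true z (hz true))]
  rintro ⟨b, -, hb⟩
  exact hz _ hb

theorem att_single (p : Q.P) (x : Node Q) (z : (Q.D p).S) (b : Bool) (hb : (Q.D p).e b z ≠ 0)
    (hb' : (Q.D p).e (!b) z = 0) (hv : Valid (att p x ((Q.D p).r b z)))
    (hh : h (att p x ((Q.D p).r b z)) p = (Q.D p).r b z) :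
    att p x z = push (att p x ((Q.D p).r b z)) (Q.pt p b) ((Q.D p).e b z) := by
  have hex : ∃ b, (Q.D p).e b z ≠ 0 ∧ (Q.D p).e (!b) z = 0 := ⟨b, hb, hb'⟩
  have hch : hex.choose = b := by
    by_contra hne
    have : hex.choose = !b := by
      revert hne
      cases hex.choose <;> cases b <;> simp
    exact hex.choose_spec.1 (by rw [this]; exact hb')
  rw [att, attW, dif_pos hex, hch]
  by_cases hr : (Q.D p).r b z = (Q.D p).o
  · rw [if_pos hr, hr, att_o, push]
  · rw [if_neg hr, ← att]
    symm
    have he : eps (att p x ((Q.D p).r b z)) (Q.pt p b) = 0 := by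
      rw [← e_h _ hv, hh, Dih.e_r]
    apply push_cyc _ _ _ hb
    intro q c hc
    obtain ⟨x', f, hx'⟩ := crit_top _ hv _ he _ hb q c hc
    have h1 : eps (att p x ((Q.D p).r b z)) (Q.pt p (!b)) ≠ 0 := by
      rw [← e_h _ hv, hh]
      intro h0
      exact hr (Dih.eq_o _ b _ (Dih.e_r _ _ _) h0)
    have h2 : Q.pt q (!c) = Q.pt p (!b) := by
      by_contra hne
      apply h1
      rw [hx', eps_cyc_ne _ _ hne]
    have hqp : q = p := by
      by_contra hne
      exact Q.line q p c b (!b) hne hc.1 h2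
    subst hqp
    have hcb : c = b := pt_inj hc.1
    subst hcb
    apply hc.2
    rw [hh, Dih.A_e_r]
    exact hb'

theorem ev_zpow (p : Q.P) (b : Bool) (t : ℤ) (z : (Q.D p).S) :
    Q.ev p (((Q.D p).A b ^ t) z) = Q.ev p z * Q.γ (Q.pt p b) ^ t := by
  have hinv : ∀ z, Q.ev p (((Q.D p).A b)⁻¹ z) = Q.ev p z * (Q.γ (Q.pt p b))⁻¹ := by
    intro z
    have := Q.ev_A p b (((Q.D p).A b)⁻¹ z)
    rw [perm_apply_inv] at this
    rw [this]; group
  induction t with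
  | zero => simp
  | succ n ih =>
    rw [add_comm, zpow_add, zpow_one, Equiv.Perm.mul_apply, Q.ev_A, ih, add_comm, zpow_add_one,
      mul_assoc]
  | pred n ih =>
    rw [sub_eq_add_neg, add_comm, zpow_add, zpow_neg_one, Equiv.Perm.mul_apply, hinv, ih,
      add_comm, zpow_add, zpow_neg_one, mul_assoc]

/-- Gate statement. -/
def GS (y : Node Q) : Prop := ∀ p, Valid (gate y p) ∧ (∀ b, eps (gate y p) (Q.pt p b) = 0) ∧
  att p (gate y p) (h y p) = y ∧ len (gate y p) + (Q.D p).l (h y p) = len y ∧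
  eval (gate y p) * Q.ev p (h y p) = eval y

/-- Attaching statement. -/
def AS (p : Q.P) (x : Node Q) (z : (Q.D p).S) : Prop :=
  Valid (att p x z) ∧ h (att p x z) p = z ∧ gate (att p x z) p = x ∧
  len (att p x z) = len x + (Q.D p).l z ∧ eval (att p x z) = eval x * Q.ev p z

/-- Pushing statement. -/
def PS (y : Node Q) (i : Q.I) (t : ℤ) : Prop :=
  Valid (push y i t) ∧ len (push y i t) = len y + t.natAbs ∧
  eval (push y i t) = eval y * Q.γ i ^ t ∧
  ∀ p b, Q.pt p b = i → h (push y i t) p = ((Q.D p).A b ^ t) (h y p) ∧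
    gate (push y i t) p = gate y p

theorem gs_step (N : ℕ)
    (hA : ∀ (p : Q.P) x z, Valid x → (∀ b, eps x (Q.pt p b) = 0) →
      len x + (Q.D p).l z < N → AS p x z)
    (hG : ∀ y : Node Q, Valid y → len y < N → GS y)
    (y : Node Q) (hy : Valid y) (hN : len y ≤ N) : GS y := by
  intro p
  cases y with
  | one =>
    have hg : gate (one : Node Q) p = one := rfl
    have hh : h (one : Node Q) p = (Q.D p).o := rfl
    rw [hg, hh]
    refine ⟨hy, fun b => rfl, att_o _ _, ?_, ?_⟩
    · simp [len, Dih.l_o]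
    · simp [eval, Q.ev_o]
  | cyc x i t =>
    obtain ⟨hv, ht, he, hc⟩ := id hy
    by_cases hi : ∃ b, Q.pt p b = i
    · obtain ⟨b, rfl⟩ := hi
      have hlt : len x < N := by
        rw [len] at hN; omega
      obtain ⟨g1, g2, g3, g4, g5⟩ := hG x hv hlt p
      rw [gate_cyc, h_cyc]
      have eb : (Q.D p).e b (h x p) = 0 := by rw [e_h x hv, he]
      have er : (Q.D p).r b (((Q.D p).A b ^ t) (h x p)) = h x p := by
        rw [Dih.r_zpow, Dih.r_of_e _ _ _ eb]
      have ee : (Q.D p).e b (((Q.D p).A b ^ t) (h x p)) = t := by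
        rw [Dih.e_zpow, eb, zero_add]
      refine ⟨g1, g2, ?_, ?_, ?_⟩
      · rw [att_single p _ _ b (by rw [ee]; exact ht) (hc p b rfl), er, ee, g3]
        · apply push_cyc _ _ _ ht
          rintro q c ⟨hq, hc'⟩
          exact hc' (hc q c hq)
        · rw [er, g3]; exact hv
        · rw [er, g3]
      · rw [Dih.l_eq _ b (((Q.D p).A b ^ t) (h x p)), er, ee, len, ← g4]
        ring
      · rw [ev_zpow, ← mul_assoc, g5, eval]
    · push Not at hi
      rw [gate_cyc_ne _ _ _ _ hi, h_cyc_ne _ _ _ _ hi]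
      refine ⟨hy, fun b => eps_cyc_ne _ _ (hi b).symm, att_o _ _, ?_, ?_⟩
      · simp [Dih.l_o]
      · simp [Q.ev_o]
  | dih x q z =>
    obtain ⟨hv, he, hz⟩ := id hy
    by_cases hpq : q = p
    · subst hpq
      rw [gate_dih, h_dih]
      exact ⟨hv, he, att_both _ _ _ hz, rfl, rfl⟩
    · by_cases hs : ∃ b c, Q.pt p b = Q.pt q c
      · obtain ⟨b, c, hbc⟩ := hs
        rw [gate_dih_share _ _ hpq hbc, h_dih_share _ _ hpq hbc]
        set r := (Q.D q).r c z with hr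
        set f := (Q.D q).e c z with hf
        have hl : (Q.D q).l z = (Q.D q).l r + f.natAbs := Dih.l_eq _ c z
        have hf0 : f ≠ 0 := hz c
        have hlt : len x + (Q.D q).l r < N := by
          rw [len] at hN; omega
        obtain ⟨a1, a2, a3, a4, a5⟩ := hA q x r hv he hlt
        have hrz : ((Q.D q).A c ^ f) r = z := Dih.A_e_r _ _ _
        have er : (Q.D q).e c r = 0 := Dih.e_r _ _ _
        have e0 : eps (att q x r) (Q.pt q c) = 0 := by
          rw [← e_h _ a1, a2, er]
        have hro : r ≠ (Q.D q).o := by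
          intro h0
          apply hz (!c)
          rw [← hrz, h0]
          have := (Q.D q).e_one (!c) f
          rwa [Bool.not_not] at this
        have e1 : eps (att q x r) (Q.pt q (!c)) ≠ 0 := by
          rw [← e_h _ a1, a2]
          intro h0
          exact hro (Dih.eq_o _ c _ er h0)
        have e2 : eps (att q x r) (Q.pt p (!b)) = 0 := by
          by_contra h0
          have hne : Q.pt p (!b) ≠ Q.pt q (!c) := Q.line p q b c (!c) (Ne.symm hpq) hbc
          rcases hw : att q x r with _ | ⟨x', j, g⟩ | ⟨x', q', z'⟩
          · rw [hw] at h0; exact h0 rfl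
          · rw [hw] at h0 e1
            by_cases hj : j = Q.pt q (!c)
            · rw [hj, eps_cyc_ne _ _ hne.symm] at h0
              exact h0 rfl
            · rw [eps_cyc_ne _ _ hj] at e1
              exact e1 rfl
          · have hq' : q' ≠ q := by
              rintro rfl
              rw [hw, eps_dih] at e0
              rw [hw] at a1
              exact a1.2.2 c e0
            rw [hw] at e1
            have : ∃ d, Q.pt q' d = Q.pt q (!c) := by
              by_contra hcon
              push Not at hcon
              exact e1 (eps_dih_ne _ _ _ _ hcon)
            obtain ⟨d, hd⟩ := this
            rw [hw, h_dih_share _ _ hq' hd.symm] at a2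
            apply hz (!c)
            rw [← hrz, ← a2]
            have := (Q.D q).e_two (!c) f ((Q.D q').e d z') hf0
            rwa [Bool.not_not] at this
        have hpush : push (att q x r) (Q.pt q c) f = dih x q z := by
          have hcr : Crit (att q x r) (Q.pt q c) f q c := by
            refine ⟨rfl, ?_⟩
            rw [a2, hrz]
            exact hz _
          rw [push_crit _ a1 _ e0 _ hf0 q c hcr, a3, a2, hrz]
        have ee : (Q.D p).e b (((Q.D p).A b ^ f) (Q.D p).o) = f := by
          rw [Dih.e_zpow, Dih.e_o, zero_add]
        have err : (Q.D p).r b (((Q.D p).A b ^ f) (Q.D p).o) = (Q.D p).o := by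
          rw [Dih.r_zpow, Dih.r_of_e _ _ _ (Dih.e_o _ _)]
        have hall : ∀ d, eps (att q x r) (Q.pt p d) = 0 := by
          intro d
          have : d = b ∨ d = !b := by cases b <;> cases d <;> simp
          rcases this with rfl | rfl
          · rw [hbc, e0]
          · exact e2
        refine ⟨a1, hall, ?_, ?_, ?_⟩
        · rw [att_single p _ _ b (by rw [ee]; exact hf0), err, ee, att_o, hbc, hpush]
          · have := (Q.D p).e_one (!b) f
            rwa [Bool.not_not] at this
          · rw [err, att_o]; exact a1
          · rw [err, att_o]; exact h_eq_o _ a1 _ hall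
        · rw [a4, Dih.l_eq _ b (((Q.D p).A b ^ f) (Q.D p).o), err, ee, Dih.l_o, len, hl]
          ring
        · rw [a5, ev_zpow, Q.ev_o, one_mul, eval, hbc, ← hrz, ev_zpow, mul_assoc]
      · push Not at hs
        rw [gate_dih_ne _ _ hs, h_dih_ne _ _ hs]
        refine ⟨hy, fun b => eps_dih_ne _ _ _ _ fun c => (hs b c).symm, att_o _ _, ?_, ?_⟩
        · simp [Dih.l_o]
        · simp [Q.ev_o]

theorem ps_step (y : Node Q) (hy : Valid y) (hG : GS y) (i : Q.I) (hi : eps y i = 0) (t : ℤ) :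
    PS y i t := by
  by_cases ht : t = 0
  · subst ht
    refine ⟨?_, ?_, ?_, ?_⟩ <;> simp [push_zero, hy]
  by_cases hc : ∃ p b, Crit y i t p b
  · obtain ⟨p, b, hc⟩ := hc
    obtain ⟨x, f, hx⟩ := crit_top y hy i hi t ht p b hc
    have hpu := push_crit y hy i hi t ht p b hc
    obtain ⟨g1, g2, g3, g4, g5⟩ := hG p
    obtain ⟨rfl, hc⟩ := hc
    have eb : (Q.D p).e b (h y p) = 0 := by rw [e_h y hy, hi]
    have er : (Q.D p).r b (((Q.D p).A b ^ t) (h y p)) = h y p := by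
      rw [Dih.r_zpow, Dih.r_of_e _ _ _ eb]
    have ee : (Q.D p).e b (((Q.D p).A b ^ t) (h y p)) = t := by
      rw [Dih.e_zpow, eb, zero_add]
    unfold PS
    rw [hpu]
    refine ⟨⟨g1, g2, ?_⟩, ?_, ?_, ?_⟩
    · intro c
      have : c = b ∨ c = !b := by cases b <;> cases c <;> simp
      rcases this with rfl | rfl
      · rw [ee]; exact ht
      · exact hc
    · rw [len, Dih.l_eq _ b (((Q.D p).A b ^ t) (h y p)), er, ee, ← g4]
      ring
    · rw [eval, ev_zpow, ← mul_assoc, g5]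
    · intro q c hq
      by_cases hqp : p = q
      · subst hqp
        have := pt_inj hq
        subst this
        exact ⟨h_dih _ _ _, gate_dih _ _ _⟩
      · have hnot : ∀ d, Q.pt q d ≠ Q.pt p (!b) := by
          intro d hd
          exact Q.line p q b c d hqp hq.symm hd.symm
        rw [h_dih_share _ _ hqp hq, gate_dih_share _ _ hqp hq, er, ee, g3]
        constructor
        · rw [hx, h_cyc_ne _ _ _ _ hnot]
        · rw [hx, gate_cyc_ne _ _ _ _ hnot]
  · push Not at hc
    unfold PS
    rw [push_cyc y i t ht hc]
    refine ⟨⟨hy, ht, hi, ?_⟩, rfl, rfl, ?_⟩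
    · intro p b hp
      by_contra h0
      exact hc p b ⟨hp, h0⟩
    · rintro p b rfl
      exact ⟨h_cyc _ _ _ _, gate_cyc _ _ _ _⟩

theorem as_step (N : ℕ)
    (hA : ∀ (p : Q.P) x z, Valid x → (∀ b, eps x (Q.pt p b) = 0) →
      len x + (Q.D p).l z < N → AS p x z)
    (hG : ∀ y : Node Q, Valid y → len y ≤ N → GS y)
    (p : Q.P) (x : Node Q) (z : (Q.D p).S) (hx : Valid x) (he : ∀ b, eps x (Q.pt p b) = 0)
    (hN : len x + (Q.D p).l z ≤ N) : AS p x z := by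
  by_cases hz : z = (Q.D p).o
  · subst hz
    have hh := h_eq_o x hx p he
    have := (hG x hx (by omega) p).2.2.1
    rw [hh, att_o] at this
    unfold AS
    rw [att_o, this, hh]
    simp [hx, Dih.l_o, Q.ev_o]
  by_cases hb : ∀ b, (Q.D p).e b z ≠ 0
  · unfold AS
    rw [att_both _ _ _ hb]
    exact ⟨⟨hx, he, hb⟩, h_dih _ _ _, gate_dih _ _ _, rfl, rfl⟩
  · push Not at hb
    obtain ⟨c, hc⟩ := hb
    obtain ⟨b, rfl⟩ : ∃ b, c = !b := ⟨!c, by simp⟩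
    have hb : (Q.D p).e b z ≠ 0 := by
      intro h0
      exact hz (Dih.eq_o _ b z h0 hc)
    have hl := Dih.l_eq (Q.D p) b z
    obtain ⟨a1, a2, a3, a4, a5⟩ := hA p x ((Q.D p).r b z) hx he (by omega)
    have hs := att_single p x z b hb hc a1 a2
    have e0 : eps (att p x ((Q.D p).r b z)) (Q.pt p b) = 0 := by
      rw [← e_h _ a1, a2, Dih.e_r]
    obtain ⟨p1, p2, p3, p4⟩ := ps_step _ a1 (hG _ a1 (by omega)) _ e0 ((Q.D p).e b z)
    obtain ⟨p5, p6⟩ := p4 p b rfl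
    unfold AS
    rw [hs]
    refine ⟨p1, ?_, ?_, ?_, ?_⟩
    · rw [p5, a2, Dih.A_e_r]
    · rw [p6, a3]
    · rw [p2, a4, hl]; ring
    · rw [p3, a5, mul_assoc, ← ev_zpow, Dih.A_e_r]

theorem main_ind (N : ℕ) :
    (∀ y : Node Q, Valid y → len y ≤ N → GS y) ∧
    (∀ (p : Q.P) x z, Valid x → (∀ b, eps x (Q.pt p b) = 0) →
      len x + (Q.D p).l z ≤ N → AS p x z) := by
  induction N using Nat.strong_induction_on with
  | _ N ih =>
    have hA : ∀ (p : Q.P) x z, Valid x → (∀ b, eps x (Q.pt p b) = 0) →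
        len x + (Q.D p).l z < N → AS p x z :=
      fun p x z hx he hl => (ih _ hl).2 p x z hx he le_rfl
    have hG : ∀ y : Node Q, Valid y → len y < N → GS y :=
      fun y hy hl => (ih _ hl).1 y hy le_rfl
    have hG' := gs_step N hA hG
    exact ⟨hG', as_step N hA hG'⟩

theorem gs (y : Node Q) (hy : Valid y) : GS y := (main_ind (len y)).1 y hy le_rfl

theorem as (p : Q.P) (x : Node Q) (z : (Q.D p).S) (hx : Valid x)
    (he : ∀ b, eps x (Q.pt p b) = 0) : AS p x z := (main_ind _).2 p x z hx he le_rfl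

theorem ext_gate (p : Q.P) (x y : Node Q) (hx : Valid x) (hy : Valid y)
    (hg : gate x p = gate y p) (hh : h x p = h y p) : x = y := by
  rw [← (gs x hx p).2.2.1, ← (gs y hy p).2.2.1, hg, hh]

theorem att_zpow (p : Q.P) (b : Bool) (x : Node Q) (z : (Q.D p).S) (hx : Valid x)
    (he : ∀ b, eps x (Q.pt p b) = 0) (hz : (Q.D p).e b z = 0) (t : ℤ) :
    att p x (((Q.D p).A b ^ t) z) = push (att p x z) (Q.pt p b) t := by
  obtain ⟨a1, a2, a3, a4, a5⟩ := as p x z hx he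
  have e0 : eps (att p x z) (Q.pt p b) = 0 := by rw [← e_h _ a1, a2, hz]
  obtain ⟨p1, p2, p3, p4⟩ := ps_step _ a1 (gs _ a1) _ e0 t
  obtain ⟨p5, p6⟩ := p4 p b rfl
  obtain ⟨c1, c2, c3, c4, c5⟩ := as p x (((Q.D p).A b ^ t) z) hx he
  apply ext_gate p _ _ c1 p1
  · rw [c3, p6, a3]
  · rw [c2, p5, a2]

/-- Independence of the line. -/
theorem act_indep (x : Node Q) (hx : Valid x) (p q : Q.P) (b c : Bool)
    (hbc : Q.pt p b = Q.pt q c) (t : ℤ) :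
    att p (gate x p) (((Q.D p).A b ^ t) (h x p)) =
      att q (gate x q) (((Q.D q).A c ^ t) (h x q)) := by
  have key : ∀ (p : Q.P) (b : Bool), ∃ y, Valid y ∧ eps y (Q.pt p b) = 0 ∧
      ∀ t, att p (gate x p) (((Q.D p).A b ^ t) (h x p)) =
        push y (Q.pt p b) (t + eps x (Q.pt p b)) := by
    intro p b
    obtain ⟨g1, g2, g3, g4, g5⟩ := gs x hx p
    obtain ⟨a1, a2, a3, a4, a5⟩ := as p (gate x p) ((Q.D p).r b (h x p)) g1 g2
    refine ⟨_, a1, ?_, ?_⟩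
    · rw [← e_h _ a1, a2, Dih.e_r]
    · intro t
      rw [← att_zpow p b _ _ g1 g2 (Dih.e_r _ _ _), ← e_h x hx, ← Dih.zpow_zpow, Dih.A_e_r]
  obtain ⟨y, hy, ey, hy'⟩ := key p b
  obtain ⟨y', hyv', ey', hyy'⟩ := key q c
  have h0 : push y (Q.pt p b) (eps x (Q.pt p b)) = x := by
    have := hy' 0
    rw [zero_add, zpow_zero, Equiv.Perm.one_apply, (gs x hx p).2.2.1] at this
    exact this.symm
  have h0' : push y' (Q.pt p b) (eps x (Q.pt p b)) = x := by
    have := hyy' 0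
    rw [zero_add, zpow_zero, Equiv.Perm.one_apply, (gs x hx q).2.2.1, ← hbc] at this
    exact this.symm
  have hyy : y = y' := by
    rw [← hbc] at ey'
    have P1 := (ps_step y hy (gs y hy) _ ey (eps x (Q.pt p b))).2.2.2 p b rfl
    have P2 := (ps_step y' hyv' (gs y' hyv') _ ey' (eps x (Q.pt p b))).2.2.2 p b rfl
    rw [h0] at P1
    rw [h0'] at P2
    apply ext_gate p _ _ hy hyv'
    · rw [← P1.2, ← P2.2]
    · exact ((Q.D p).A b ^ (eps x (Q.pt p b))).injective (P1.1.symm.trans P2.1)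
  rw [hy', hyy', hyy, hbc]

end Node
/-! ### The dihedral Artin group of finite type: combinatorial model -/

namespace DihFin

/-- Raw states: power of the Garside element, lengths of the simple factors (last one first),
last letter. -/
abbrev R := ℤ × List ℕ × Bool

/-- Normalised last letter. -/
def nb : List ℕ → Bool → Bool
  | [], _ => true
  | _ :: _, b => b

/-- Admissible states. -/
def OK (m : ℕ) (s : R) : Prop := (∀ p ∈ s.2.1, 1 ≤ p ∧ p < m) ∧ nb s.2.1 s.2.2 = s.2.2

/-- Right multiplication by a generator. -/
def fwd (m : ℕ) (c : Bool) : R → R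
  | (k, [], _) => (k, [1], c)
  | (k, p :: ps, b) => if b = c then (k, 1 :: p :: ps, c) else
      if p + 1 < m then (k, (p + 1) :: ps, c) else (k + 1, ps, nb ps (!c))

/-- Right multiplication by the inverse of a generator. -/
def bwd (m : ℕ) (c : Bool) : R → R
  | (k, [], _) => (k - 1, [m - 1], !c)
  | (k, p :: ps, b) => if b = c then
      (if p = 1 then (k, ps, nb ps c) else (k, (p - 1) :: ps, !c))
      else (k - 1, (m - 1) :: p :: ps, !c)

/-- Length of the last factor, as seen by the letter `c`. -/
def tail (c : Bool) : R → ℤ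
  | (_, [], _) => 0
  | (_, p :: _, b) => if b = c then 0 else (p : ℤ)

/-- The lower bound functions. -/
def L (m : ℕ) (q : ℤ) (s : R) : ℤ :=
  (s.2.1.map fun p : ℕ => min (p : ℤ) (2 * q - p)).sum + (2 * q - m) * s.1

theorem nb_nb (ps : List ℕ) (b : Bool) : nb ps (nb ps b) = nb ps b := by cases ps <;> rfl

theorem OK_fwd {m : ℕ} (hm : 3 ≤ m) (c : Bool) {s : R} (hs : OK m s) : OK m (fwd m c s) := by
  obtain ⟨k, ps, b⟩ := s
  obtain ⟨h1, h2⟩ := hs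
  cases ps with
  | nil => refine ⟨?_, rfl⟩; simp [fwd]; omega
  | cons p ps =>
    simp only [List.mem_cons, forall_eq_or_imp] at h1
    rw [fwd]
    split_ifs with hb hp
    · refine ⟨?_, rfl⟩
      simp only [List.mem_cons, forall_eq_or_imp]
      exact ⟨by omega, h1⟩
    · refine ⟨?_, rfl⟩
      simp only [List.mem_cons, forall_eq_or_imp]
      exact ⟨by omega, h1.2⟩
    · exact ⟨h1.2, nb_nb _ _⟩

theorem OK_bwd {m : ℕ} (hm : 3 ≤ m) (c : Bool) {s : R} (hs : OK m s) : OK m (bwd m c s) := by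
  obtain ⟨k, ps, b⟩ := s
  obtain ⟨h1, h2⟩ := hs
  cases ps with
  | nil => refine ⟨?_, rfl⟩; simp [bwd]; omega
  | cons p ps =>
    simp only [List.mem_cons, forall_eq_or_imp] at h1
    rw [bwd]
    split_ifs with hb hp
    · exact ⟨h1.2, nb_nb _ _⟩
    · refine ⟨?_, rfl⟩
      simp only [List.mem_cons, forall_eq_or_imp]
      exact ⟨by omega, h1.2⟩
    · refine ⟨?_, rfl⟩
      simp only [List.mem_cons, forall_eq_or_imp]
      exact ⟨by omega, h1⟩

theorem fwd_bwd {m : ℕ} (hm : 3 ≤ m) (c : Bool) {s : R} (hs : OK m s) :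
    fwd m c (bwd m c s) = s := by
  obtain ⟨k, ps, b⟩ := s
  obtain ⟨h1, h2⟩ := hs
  have hnc : (!c) ≠ c := by cases c <;> simp
  cases ps with
  | nil =>
    have hb : true = b := h2
    have h3 : ¬ (m - 1 + 1 < m) := by omega
    subst hb
    simp [bwd, fwd, h3, nb]
  | cons p ps =>
    simp only [List.mem_cons, forall_eq_or_imp] at h1
    rw [bwd]
    split_ifs with hb hp
    · subst hb hp
      cases ps <;> simp [fwd, nb]
    · subst hb
      have h3 : p - 1 + 1 = p := by omega
      simp [fwd, h3, h1.1.2]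
    · have h3 : ¬ (m - 1 + 1 < m) := by omega
      have hb' : b = !c := by cases b <;> cases c <;> simp_all
      subst hb'
      simp [fwd, h3, nb]

theorem bwd_fwd {m : ℕ} (hm : 3 ≤ m) (c : Bool) {s : R} (hs : OK m s) :
    bwd m c (fwd m c s) = s := by
  obtain ⟨k, ps, b⟩ := s
  obtain ⟨h1, h2⟩ := hs
  cases ps with
  | nil =>
    have hb : true = b := h2
    subst hb
    simp [bwd, fwd, nb]
  | cons p ps =>
    simp only [List.mem_cons, forall_eq_or_imp] at h1
    rw [fwd]
    split_ifs with hb hp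
    · subst hb
      simp [bwd, nb]
    · have hb' : b = !c := by cases b <;> cases c <;> simp_all
      subst hb'
      have h3 : p ≠ 0 := by omega
      simp [bwd, h3]
    · have hb' : b = !c := by cases b <;> cases c <;> simp_all
      subst hb'
      have h3 : m - 1 = p := by omega
      cases ps <;> simp [bwd, nb, h3]

theorem L_fwd {m : ℕ} (hm : 3 ≤ m) (c : Bool) {s : R} (hs : OK m s) (q : ℤ) (h0 : 0 ≤ q)
    (hq : q ≤ m) : L m q (fwd m c s) = L m q s + if tail c s < q then 1 else -1 := by
  obtain ⟨k, ps, b⟩ := s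
  obtain ⟨h1, h2⟩ := hs
  cases ps with
  | nil =>
    simp only [L, fwd, tail, List.map_cons, List.map_nil, List.sum_cons, List.sum_nil]
    push_cast
    split_ifs <;> omega
  | cons p ps =>
    simp only [List.mem_cons, forall_eq_or_imp] at h1
    by_cases hb : b = c
    · simp only [L, fwd, tail, hb, if_true, List.map_cons, List.sum_cons]
      push_cast
      split_ifs <;> omega
    · by_cases hp : p + 1 < m
      · simp only [L, fwd, tail, hb, hp, if_true, if_false, List.map_cons, List.sum_cons]
        push_cast
        split_ifs <;> omega
      · have h3 : (p : ℤ) = m - 1 := by omega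
        simp only [L, fwd, tail, hb, hp, if_false, List.map_cons, List.sum_cons, mul_add]
        split_ifs <;> omega

theorem tail_bwd_nil (m : ℕ) (hm : 3 ≤ m) (c b : Bool) (k : ℤ) :
    tail c (bwd m c (k, [], b)) = m - 1 := by
  have : ((m - 1 : ℕ) : ℤ) = m - 1 := by omega
  cases c <;> simp [bwd, tail, this]

theorem tail_bwd_self (m : ℕ) (c : Bool) (k : ℤ) (p : ℕ) (ps : List ℕ) (hp : 1 ≤ p) :
    tail c (bwd m c (k, p :: ps, c)) = p - 1 := by
  by_cases h1 : p = 1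
  · subst h1
    cases ps <;> simp [bwd, tail, nb]
  · have : ((p - 1 : ℕ) : ℤ) = p - 1 := by omega
    cases c <;> simp [bwd, tail, h1, this]

theorem tail_bwd_ne (m : ℕ) (hm : 3 ≤ m) (c b : Bool) (k : ℤ) (p : ℕ) (ps : List ℕ) (hb : b ≠ c) :
    tail c (bwd m c (k, p :: ps, b)) = m - 1 := by
  have : ((m - 1 : ℕ) : ℤ) = m - 1 := by omega
  cases c <;> simp [bwd, tail, hb, this]

theorem tail_le {m : ℕ} (hm : 3 ≤ m) (c : Bool) {s : R} (hs : OK m s) :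
    tail c s ≤ tail c (bwd m c s) := by
  obtain ⟨k, ps, b⟩ := s
  obtain ⟨h1, h2⟩ := hs
  cases ps with
  | nil => rw [tail_bwd_nil m hm]; simp [tail]; omega
  | cons p ps =>
    simp only [List.mem_cons, forall_eq_or_imp] at h1
    by_cases hb : b = c
    · subst hb
      rw [tail_bwd_self _ _ _ _ _ h1.1.1]; simp [tail]; omega
    · rw [tail_bwd_ne _ hm _ _ _ _ _ hb]; simp [tail, hb]; omega

theorem L_parity (m : ℕ) (q q' : ℤ) (s : R) : ∃ c, L m q s - L m q' s = 2 * c := by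
  obtain ⟨k, ps, b⟩ := s
  simp only [L]
  induction ps with
  | nil => exact ⟨(q - q') * k, by simp; ring⟩
  | cons p ps ih =>
    obtain ⟨c, hc⟩ := ih
    simp only [List.map_cons, List.sum_cons]
    have : ∃ d, min (p : ℤ) (2 * q - p) - min (p : ℤ) (2 * q' - p) = 2 * d := by
      rcases min_cases (p : ℤ) (2 * q - p) with h | h <;>
        rcases min_cases (p : ℤ) (2 * q' - p) with h' | h'
      · exact ⟨0, by omega⟩
      · exact ⟨p - q', by omega⟩
      · exact ⟨q - p, by omega⟩
      · exact ⟨q - q', by omega⟩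
    obtain ⟨d, hd⟩ := this
    exact ⟨c + d, by linarith⟩

theorem exists_l {m : ℕ} {s : R} (hs : OK m s) : ∃ N : ℕ,
    (∀ q : ℤ, 0 ≤ q → q ≤ m → L m q s ≤ N) ∧ ∃ q : ℤ, 0 ≤ q ∧ q ≤ m ∧ L m q s = N := by
  obtain ⟨q, hq, hmax⟩ := Finset.exists_max_image (Finset.Icc (0 : ℤ) m) (fun q => L m q s)
    ⟨0, by simp⟩
  have hsum : L m 0 s + L m m s = 0 := by
    obtain ⟨k, ps, b⟩ := s
    obtain ⟨h1, -⟩ := hs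
    simp only [L]
    simp only at h1
    have : (ps.map fun p : ℕ => min (p : ℤ) (2 * 0 - p)).sum +
        (ps.map fun p : ℕ => min (p : ℤ) (2 * (m : ℤ) - p)).sum = 0 := by
      clear hmax
      induction ps with
      | nil => simp
      | cons p ps ih =>
        simp only [List.mem_cons, forall_eq_or_imp] at h1
        have := ih h1.2
        simp only [List.map_cons, List.sum_cons]
        omega
    linarith
  have h0 := hmax 0 (by simp)
  have h1 := hmax m (by simp)
  simp only [Finset.mem_Icc] at hq hmax
  refine ⟨(L m q s).toNat, ?_, q, hq.1, hq.2, ?_⟩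
  · intro q' h h'
    have := hmax q' ⟨h, h'⟩
    omega
  · omega

/-- State space. -/
abbrev St (m : ℕ) := {s : R // OK m s}

/-- Length. -/
noncomputable def len {m : ℕ} (s : St m) : ℕ := (exists_l s.2).choose

theorem L_le {m : ℕ} (s : St m) (q : ℤ) (h0 : 0 ≤ q) (hq : q ≤ m) : L m q s.1 ≤ len s :=
  (exists_l s.2).choose_spec.1 q h0 hq

theorem L_eq {m : ℕ} (s : St m) : ∃ q : ℤ, 0 ≤ q ∧ q ≤ m ∧ L m q s.1 = len s :=
  (exists_l s.2).choose_spec.2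

/-- Right multiplication by a generator as a permutation. -/
def act {m : ℕ} (hm : 3 ≤ m) (c : Bool) : Equiv.Perm (St m) where
  toFun s := ⟨fwd m c s.1, OK_fwd hm c s.2⟩
  invFun s := ⟨bwd m c s.1, OK_bwd hm c s.2⟩
  left_inv s := Subtype.ext (bwd_fwd hm c s.2)
  right_inv s := Subtype.ext (fwd_bwd hm c s.2)

variable {m : ℕ} (hm : 3 ≤ m)

theorem act_val (c : Bool) (s : St m) : (act hm c s).1 = fwd m c s.1 := rfl

theorem act_inv_val (c : Bool) (s : St m) : ((act hm c)⁻¹ s).1 = bwd m c s.1 := rfl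

theorem L_act (c : Bool) (s : St m) (q : ℤ) (h0 : 0 ≤ q) (hq : q ≤ m) :
    L m q (act hm c s).1 = L m q s.1 + if tail c s.1 < q then 1 else -1 :=
  L_fwd hm c s.2 q h0 hq

theorem L_act_inv (c : Bool) (s : St m) (q : ℤ) (h0 : 0 ≤ q) (hq : q ≤ m) :
    L m q ((act hm c)⁻¹ s).1 = L m q s.1 - if tail c (bwd m c s.1) < q then 1 else -1 := by
  have := L_act hm c ((act hm c)⁻¹ s) q h0 hq
  rw [perm_apply_inv, act_inv_val] at this
  rw [act_inv_val]
  linarith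

theorem step (c : Bool) (s : St m) :
    len (act hm c s) = len s + 1 ∨ len s = len (act hm c s) + 1 := by
  obtain ⟨q, h0, hq, h⟩ := L_eq s
  obtain ⟨q', h0', hq', h'⟩ := L_eq (act hm c s)
  have h1 := L_le (act hm c s) q h0 hq
  have h2 := L_le s q' h0' hq'
  have h3 := L_act hm c s q h0 hq
  have h4 := L_act hm c s q' h0' hq'
  obtain ⟨d, hd⟩ := L_parity m q q' s.1
  split_ifs at h3 h4 <;> omega

theorem step' (c : Bool) (s : St m) :
    len ((act hm c)⁻¹ s) = len s + 1 ∨ len s = len ((act hm c)⁻¹ s) + 1 := by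
  have := step hm c ((act hm c)⁻¹ s)
  rw [perm_apply_inv] at this
  omega

theorem up_of (c : Bool) (s : St m) (q : ℤ) (h0 : 0 ≤ q) (hq : q ≤ m) (h : L m q s.1 = len s)
    (ht : tail c s.1 < q) : len s < len (act hm c s) := by
  have h1 := L_le (act hm c s) q h0 hq
  rw [L_act hm c s q h0 hq, if_pos ht] at h1
  omega

theorem of_up (c : Bool) (s : St m) (hup : len s < len (act hm c s)) :
    ∃ q : ℤ, 0 ≤ q ∧ q ≤ m ∧ L m q s.1 = len s ∧ tail c s.1 < q := by
  obtain ⟨q, h0, hq, h⟩ := L_eq (act hm c s)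
  have h1 := L_le s q h0 hq
  rw [L_act hm c s q h0 hq] at h
  split_ifs at h with ht
  · exact ⟨q, h0, hq, by omega, ht⟩
  · omega

theorem up_of' (c : Bool) (s : St m) (q : ℤ) (h0 : 0 ≤ q) (hq : q ≤ m) (h : L m q s.1 = len s)
    (ht : q ≤ tail c (bwd m c s.1)) : len s < len ((act hm c)⁻¹ s) := by
  have h1 := L_le ((act hm c)⁻¹ s) q h0 hq
  rw [L_act_inv hm c s q h0 hq, if_neg (by omega)] at h1
  omega

theorem of_up' (c : Bool) (s : St m) (hup : len s < len ((act hm c)⁻¹ s)) :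
    ∃ q : ℤ, 0 ≤ q ∧ q ≤ m ∧ L m q s.1 = len s ∧ q ≤ tail c (bwd m c s.1) := by
  obtain ⟨q, h0, hq, h⟩ := L_eq ((act hm c)⁻¹ s)
  have h1 := L_le s q h0 hq
  rw [L_act_inv hm c s q h0 hq] at h
  split_ifs at h with ht
  · omega
  · exact ⟨q, h0, hq, by omega, by omega⟩

theorem nopeak (c : Bool) (s : St m) :
    ¬ (len (act hm c s) < len s ∧ len ((act hm c)⁻¹ s) < len s) := by
  rintro ⟨h1, h2⟩
  obtain ⟨q, h0, hq, h⟩ := L_eq s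
  have h3 : ¬ tail c s.1 < q := fun ht => by
    have := up_of hm c s q h0 hq h ht
    omega
  have h4 : ¬ q ≤ tail c (bwd m c s.1) := fun ht => by
    have := up_of' hm c s q h0 hq h ht
    omega
  have := tail_le hm c s.2
  omega

theorem L_tangent_lt (q p : ℤ) (k : ℤ) (ps : List ℕ) (b : Bool) :
    L m q (k, ps, b) ≤ L m p (k, ps, b) +
      2 * ((q - p) * ((ps.map fun x : ℕ => if p < x then (1 : ℤ) else 0).sum + k)) := by
  simp only [L]
  induction ps with
  | nil => simp; linarith
  | cons x ps ih =>
    simp only [List.map_cons, List.sum_cons]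
    have : min (x : ℤ) (2 * q - x) ≤ min (x : ℤ) (2 * p - x) +
        2 * ((q - p) * if p < x then (1 : ℤ) else 0) := by
      split_ifs <;> omega
    linarith

theorem L_tangent_le (q p : ℤ) (k : ℤ) (ps : List ℕ) (b : Bool) :
    L m q (k, ps, b) ≤ L m p (k, ps, b) +
      2 * ((q - p) * ((ps.map fun x : ℕ => if p ≤ x then (1 : ℤ) else 0).sum + k)) := by
  simp only [L]
  induction ps with
  | nil => simp; linarith
  | cons x ps ih =>
    simp only [List.map_cons, List.sum_cons]
    have : min (x : ℤ) (2 * q - x) ≤ min (x : ℤ) (2 * p - x) +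
        2 * ((q - p) * if p ≤ x then (1 : ℤ) else 0) := by
      split_ifs <;> omega
    linarith

/-- The base state. -/
def base : St m := ⟨(0, [], true), by simp [OK, nb]⟩

theorem desc (s : St m) (hs : s ≠ base) :
    ∃ c, len (act hm c s) < len s ∨ len ((act hm c)⁻¹ s) < len s := by
  by_contra hcon
  push Not at hcon
  have hu : ∀ c, len s < len (act hm c s) := fun c => by
    have := step hm c s
    have := (hcon c).1
    omega
  have hd : ∀ c, len s < len ((act hm c)⁻¹ s) := fun c => by
    have := step' hm c s
    have := (hcon c).2
    omega
  obtain ⟨⟨k, ps, b⟩, hok⟩ := s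
  have h1 := hok.1
  have h2 := hok.2
  cases ps with
  | nil =>
    have hb : true = b := h2
    subst hb
    obtain ⟨q, h0, hq, h, ht⟩ := of_up hm true _ (hu true)
    obtain ⟨q', h0', hq', h', ht'⟩ := of_up' hm true _ (hd true)
    have l1 := L_le ⟨(k, [], true), hok⟩ 0 le_rfl (by omega)
    have l2 := L_le ⟨(k, [], true), hok⟩ m (by omega) le_rfl
    simp only [tail_bwd_nil m hm] at ht'
    simp only [tail] at ht
    rw [← h] at l1
    rw [← h'] at l2
    simp only [L, List.map_nil, List.sum_nil, zero_add] at l1 l2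
    have k1 : 0 ≤ k := by
      by_contra hk
      push Not at hk
      nlinarith
    have k2 : k ≤ 0 := by
      by_contra hk
      push Not at hk
      nlinarith
    have : k = 0 := le_antisymm k2 k1
    subst this
    exact hs rfl
  | cons p ps =>
    simp only [List.mem_cons, forall_eq_or_imp] at h1
    obtain ⟨q, h0, hq, h, ht⟩ := of_up hm (!b) _ (hu (!b))
    obtain ⟨q', h0', hq', h', ht'⟩ := of_up' hm b _ (hd b)
    have l1 := L_le ⟨(k, p :: ps, b), hok⟩ p (by omega) (by omega)
    simp only [tail_bwd_self _ _ _ _ _ h1.1.1] at ht'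
    have hbb : b ≠ !b := by cases b <;> simp
    simp only [tail, if_neg hbb] at ht
    have t1 := L_tangent_lt (m := m) q p k (p :: ps) b
    have t2 := L_tangent_le (m := m) q' p k (p :: ps) b
    simp only at h h' l1
    simp only [List.map_cons, List.sum_cons, lt_irrefl, if_false, le_refl, if_true] at t1 t2
    have hcmp : (ps.map fun x : ℕ => if (p : ℤ) < x then (1 : ℤ) else 0).sum ≤
        (ps.map fun x : ℕ => if (p : ℤ) ≤ x then (1 : ℤ) else 0).sum := by
      apply List.sum_le_sum
      intro x _
      split_ifs <;> omega
    set c1 := (ps.map fun x : ℕ => if (p : ℤ) < x then (1 : ℤ) else 0).sum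
    set c2 := (ps.map fun x : ℕ => if (p : ℤ) ≤ x then (1 : ℤ) else 0).sum
    have k1 : 0 ≤ 0 + c1 + k := by
      by_contra hk
      push Not at hk
      nlinarith
    have k2 : 1 + c2 + k ≤ 0 := by
      by_contra hk
      push Not at hk
      nlinarith
    omega

theorem len_base : len (base : St m) = 0 := by
  obtain ⟨q, h0, hq, h⟩ := L_eq (base : St m)
  have h2 : L m q (base : St m).1 = 0 := by simp [L, base]
  omega

theorem len_zpow_le (c : Bool) (t : ℤ) (s : St m) :
    len ((act hm c ^ t) s) ≤ len s + t.natAbs := by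
  obtain ⟨n, rfl | rfl⟩ := Int.eq_nat_or_neg t
  · rw [zpow_natCast, Int.natAbs_natCast]
    induction n with
    | zero => simp
    | succ n ih =>
      rw [pow_succ', Equiv.Perm.mul_apply]
      have := step hm c ((act hm c ^ n) s)
      omega
  · rw [zpow_neg, zpow_natCast, ← inv_pow, Int.natAbs_neg, Int.natAbs_natCast]
    induction n with
    | zero => simp
    | succ n ih =>
      rw [pow_succ', Equiv.Perm.mul_apply]
      have := step' hm c (((act hm c)⁻¹ ^ n) s)
      omega

theorem pow_val (c : Bool) (n : ℕ) (s : St m) (k : ℤ) (ps : List ℕ) (h : s.1 = (k, ps, nb ps c)) :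
    ((act hm c ^ n) s).1 = (k, List.replicate n 1 ++ ps, nb (List.replicate n 1 ++ ps) c) := by
  induction n with
  | zero => simpa using h
  | succ n ih =>
    rw [pow_succ', Equiv.Perm.mul_apply, act_val, ih, List.replicate_succ, List.cons_append]
    generalize List.replicate n 1 ++ ps = l
    cases l <;> simp [fwd, nb]

theorem inv_pow_val (c : Bool) (n : ℕ) (s : St m) (k : ℤ) (ps : List ℕ)
    (h : s.1 = (k, ps, nb ps (!c))) :
    (((act hm c)⁻¹ ^ n) s).1 = (k - n, List.replicate n (m - 1) ++ ps,
      nb (List.replicate n (m - 1) ++ ps) (!c)) := by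
  induction n with
  | zero => simpa using h
  | succ n ih =>
    rw [pow_succ', Equiv.Perm.mul_apply, act_inv_val, ih, List.replicate_succ, List.cons_append]
    generalize List.replicate n (m - 1) ++ ps = l
    cases l <;> simp [bwd, nb] <;> ring

theorem L_rep (q : ℤ) (n x : ℕ) : ((List.replicate n x).map fun p : ℕ =>
    min (p : ℤ) (2 * q - p)).sum = n * min (x : ℤ) (2 * q - x) := by
  simp

theorem two (b : Bool) (t f : ℤ) (ht : t ≠ 0) :
    len ((act hm (!b) ^ t) ((act hm b ^ f) base)) <
      len (act hm b ((act hm (!b) ^ t) ((act hm b ^ f) base))) ∧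
    len ((act hm (!b) ^ t) ((act hm b ^ f) base)) <
      len ((act hm b)⁻¹ ((act hm (!b) ^ t) ((act hm b ^ f) base))) := by
  have hle : len ((act hm (!b) ^ t) ((act hm b ^ f) base)) ≤ f.natAbs + t.natAbs := by
    have h1 := len_zpow_le hm (!b) t ((act hm b ^ f) base)
    have h2 := len_zpow_le hm b f (base : St m)
    rw [len_base] at h2
    omega
  -- it suffices to find suitable values of `q`
  have key : ∀ z : St m, len z ≤ f.natAbs + t.natAbs → ∀ q q' : ℤ, 0 ≤ q → q ≤ m → 0 ≤ q' →
      q' ≤ m → L m q z.1 = f.natAbs + t.natAbs → L m q' z.1 = f.natAbs + t.natAbs →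
      tail b z.1 < q → q' ≤ tail b (bwd m b z.1) →
      len z < len (act hm b z) ∧ len z < len ((act hm b)⁻¹ z) := by
    intro z hz q q' h0 hq h0' hq' hL hL' ht ht'
    have l1 := L_le z q h0 hq
    have l2 := L_le z q' h0' hq'
    exact ⟨up_of hm b z q h0 hq (by omega) ht, up_of' hm b z q' h0' hq' (by omega) ht'⟩
  have hbase : ∀ c, (base : St m).1 = (0, [], nb [] c) := fun c => rfl
  have hbb : (!b) ≠ b := by cases b <;> simp
  have hm1 : ((m - 1 : ℕ) : ℤ) = m - 1 := by omega
  have hm2 : ((m - 2 : ℕ) : ℤ) = m - 2 := by omega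
  obtain ⟨n, hn⟩ := Int.eq_nat_or_neg t
  obtain ⟨g, hg⟩ := Int.eq_nat_or_neg f
  have hn0 : n ≠ 0 := by omega
  obtain ⟨n, rfl⟩ := Nat.exists_eq_succ_of_ne_zero hn0
  rcases hn with rfl | rfl <;> rcases hg with rfl | rfl
  · -- both positive
    cases g with
    | zero =>
      have hz := pow_val hm (!b) (n + 1) base 0 [] (hbase _)
      simp only [zpow_natCast, Nat.succ_eq_add_one, pow_zero, Equiv.Perm.one_apply] at hle ⊢
      have hs : ∀ q : ℤ, 1 ≤ q → L m q (0, List.replicate (n + 1) 1 ++ [],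
          nb (List.replicate (n + 1) 1 ++ []) (!b)) = n + 1 := by
        intro q hq
        simp only [L, List.append_nil, L_rep]
        rw [min_eq_left (by omega)]; push_cast; ring
      apply key _ hle (m - 1) (m - 1) (by omega) (by omega) (by omega) (by omega) <;> rw [hz]
      · rw [hs _ (by omega)]; omega
      · rw [hs _ (by omega)]; omega
      · simp only [List.replicate_succ, List.append_nil, nb, tail, if_neg hbb]; omega
      · simp only [List.replicate_succ, List.append_nil, nb, tail_bwd_ne m hm _ _ _ _ _ hbb]
        omega
    | succ g =>
      have h1 := pow_val hm b (g + 1) base 0 [] (hbase _)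
      have h2 : (act hm (!b) ((act hm b ^ (g + 1)) base)).1 =
          (0, 2 :: List.replicate g 1, nb (2 :: List.replicate g 1) (!b)) := by
        rw [act_val, h1]
        have : 1 + 1 < m := by omega
        simp only [List.replicate_succ, List.append_nil, nb, fwd, if_neg hbb.symm, if_pos this]
      have hz := pow_val hm (!b) n _ _ _ h2
      rw [← Equiv.Perm.mul_apply, ← pow_succ] at hz
      simp only [zpow_natCast, Nat.succ_eq_add_one] at hle ⊢
      have hs : ∀ q : ℤ, 2 ≤ q → L m q
          (0, List.replicate n 1 ++ 2 :: List.replicate g 1,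
            nb (List.replicate n 1 ++ 2 :: List.replicate g 1) (!b)) = n + g + 2 := by
        intro q hq
        simp only [L, List.map_append, List.sum_append, List.map_cons, List.sum_cons, L_rep]
        rw [min_eq_left (by omega), min_eq_left (by omega)]
        push_cast; ring
      apply key _ hle m (m - 1) (by omega) (by omega) (by omega) (by omega) <;> rw [hz]
      · rw [hs _ (by omega)]; omega
      · rw [hs _ (by omega)]; omega
      · cases n with
        | zero => simp only [List.replicate_zero, List.nil_append, nb, tail, if_neg hbb]; omega
        | succ n => simp only [List.replicate_succ, List.cons_append, nb, tail, if_neg hbb]; omega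
      · cases n with
        | zero => simp only [List.replicate_zero, List.nil_append, nb, tail_bwd_ne m hm _ _ _ _ _ hbb]; omega
        | succ n => simp only [List.replicate_succ, List.cons_append, nb, tail_bwd_ne m hm _ _ _ _ _ hbb]; omega
  · -- negative, then positive
    have h1 := inv_pow_val hm b g base 0 [] (hbase _)
    simp only [List.append_nil] at h1
    have hz := pow_val hm (!b) (n + 1) _ _ _ h1
    simp only [zpow_natCast, zpow_neg, ← inv_pow, Nat.succ_eq_add_one] at hle ⊢
    have hs : ∀ q : ℤ, 1 ≤ q → q ≤ m - 1 → L m q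
        (0 - g, List.replicate (n + 1) 1 ++ List.replicate g (m - 1),
          nb (List.replicate (n + 1) 1 ++ List.replicate g (m - 1)) (!b)) = n + g + 1 := by
      intro q hq hq'
      simp only [L, List.map_append, List.sum_append, L_rep]
      rw [min_eq_left (by omega), min_eq_right (by omega), hm1]
      push_cast; ring
    apply key _ hle (m - 1) (m - 1) (by omega) (by omega) (by omega) (by omega) <;> rw [hz]
    · rw [hs _ (by omega) (by omega)]; omega
    · rw [hs _ (by omega) (by omega)]; omega
    · simp only [List.replicate_succ, List.cons_append, nb, tail, if_neg hbb]; omega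
    · simp only [List.replicate_succ, List.cons_append, nb, tail_bwd_ne m hm _ _ _ _ _ hbb]; omega
  · -- positive, then negative
    have h1 := pow_val hm b g base 0 [] (hbase _)
    simp only [List.append_nil] at h1
    rw [← Bool.not_not b] at h1
    have hz := inv_pow_val hm (!b) (n + 1) _ _ _ h1
    simp only [Bool.not_not] at hz
    simp only [zpow_natCast, zpow_neg, ← inv_pow, Nat.succ_eq_add_one] at hle ⊢
    have hs : ∀ q : ℤ, 1 ≤ q → q ≤ m - 1 → L m q
        (0 - (n + 1 : ℕ), List.replicate (n + 1) (m - 1) ++ List.replicate g 1,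
          nb (List.replicate (n + 1) (m - 1) ++ List.replicate g 1) b) = n + g + 1 := by
      intro q hq hq'
      simp only [L, List.map_append, List.sum_append, L_rep]
      rw [min_eq_right (by omega), min_eq_left (by omega), hm1]
      push_cast; ring
    apply key _ hle (m - 1) 1 (by omega) (by omega) (by omega) (by omega) <;> rw [hz]
    · rw [hs _ (by omega) (by omega)]; omega
    · rw [hs _ (by omega) (by omega)]; omega
    · simp only [List.replicate_succ, List.cons_append, nb, tail, if_true]; omega
    · simp only [List.replicate_succ, List.cons_append, nb]
      rw [tail_bwd_self _ _ _ _ _ (by omega)]; omega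
  · -- both negative
    cases g with
    | zero =>
      have hz := inv_pow_val hm (!b) (n + 1) base 0 [] (hbase _)
      simp only [Bool.not_not, List.append_nil] at hz
      simp only [zpow_natCast, zpow_neg, ← inv_pow, Nat.succ_eq_add_one, pow_zero, inv_one,
        Equiv.Perm.one_apply] at hle ⊢
      have hs : ∀ q : ℤ, 1 ≤ q → q ≤ m - 1 → L m q
          (0 - (n + 1 : ℕ), List.replicate (n + 1) (m - 1),
            nb (List.replicate (n + 1) (m - 1)) b) = n + 1 := by
        intro q hq hq'
        simp only [L, L_rep]
        rw [min_eq_right (by omega), hm1]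
        push_cast; ring
      apply key _ hle (m - 1) 1 (by omega) (by omega) (by omega) (by omega) <;> rw [hz]
      · rw [hs _ (by omega) (by omega)]; omega
      · rw [hs _ (by omega) (by omega)]; omega
      · simp only [List.replicate_succ, nb, tail, if_true]; omega
      · simp only [List.replicate_succ, nb]
        rw [tail_bwd_self _ _ _ _ _ (by omega)]; omega
    | succ g =>
      have h1 := inv_pow_val hm b (g + 1) base 0 [] (hbase _)
      have h2 : ((act hm (!b))⁻¹ (((act hm b)⁻¹ ^ (g + 1)) base)).1 =
          ((0 : ℤ) - ((g + 1 : ℕ) : ℤ), (m - 2) :: List.replicate g (m - 1),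
            nb ((m - 2) :: List.replicate g (m - 1)) (!(!b))) := by
        rw [act_inv_val, h1]
        have h3 : ¬ (m - 1 = 1) := by omega
        have h4 : m - 1 - 1 = m - 2 := by omega
        simp only [List.replicate_succ, List.append_nil, nb, bwd, if_true, if_neg h3, h4]
      have hz := inv_pow_val hm (!b) n _ _ _ h2
      rw [← Equiv.Perm.mul_apply, ← pow_succ] at hz
      simp only [Bool.not_not] at hz
      simp only [zpow_natCast, zpow_neg, ← inv_pow, Nat.succ_eq_add_one] at hle ⊢
      have hs : ∀ q : ℤ, 0 ≤ q → q ≤ m - 2 → L m q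
          (0 - (g + 1 : ℕ) - n, List.replicate n (m - 1) ++ (m - 2) :: List.replicate g (m - 1),
            nb (List.replicate n (m - 1) ++ (m - 2) :: List.replicate g (m - 1)) b)
            = n + g + 2 := by
        intro q hq hq'
        simp only [L, List.map_append, List.sum_append, List.map_cons, List.sum_cons, L_rep]
        rw [min_eq_right (by omega), min_eq_right (by omega), hm1, hm2]
        push_cast; ring
      apply key _ hle (m - 2) 0 (by omega) (by omega) (by omega) (by omega) <;> rw [hz]
      · rw [hs _ (by omega) (by omega)]; omega
      · rw [hs _ (by omega) (by omega)]; omega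
      · cases n with
        | zero => simp only [List.replicate_zero, List.nil_append, nb, tail, if_true]; omega
        | succ n => simp only [List.replicate_succ, List.cons_append, nb, tail, if_true]; omega
      · cases n with
        | zero =>
          simp only [List.replicate_zero, List.nil_append, nb]
          rw [tail_bwd_self _ _ _ _ _ (by omega)]; omega
        | succ n =>
          simp only [List.replicate_succ, List.cons_append, nb]
          rw [tail_bwd_self _ _ _ _ _ (by omega)]; omega

/-- The dihedral data of finite type. -/
noncomputable def data : Dih where
  S := St m
  o := base
  A := act hm
  l := len
  l_o := len_base
  step := step hm
  nopeak := nopeak hm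
  desc := desc hm
  two := two hm

end DihFin

/-! ### Braid relation and evaluation for the finite model -/

namespace DihFin

/-- The last letter of the alternating word of length `j` starting with `f`. -/
def last : ℕ → Bool → Bool
  | 0, f => !f
  | j + 1, f => last j (!f)

theorem last_not (j : ℕ) (f : Bool) : last j (!f) = !last j f := by
  induction j generalizing f with
  | zero => rfl
  | succ j ih => rw [last, last, ih (!f)]

theorem last_succ (j : ℕ) (f : Bool) : last (j + 1) f = !last j f := by
  rw [last, last_not]

theorem last_last (j : ℕ) (f : Bool) : last j (last j f) = f := by
  induction j with
  | zero => simp [last]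
  | succ j ih => rw [last_succ, last_succ, last_not, ih, Bool.not_not]

theorem last_add (i j : ℕ) (f : Bool) : last (i + j) f = last j (!last i f) := by
  induction i generalizing f with
  | zero => simp [last]
  | succ i ih => rw [Nat.succ_add, last, ih]; rfl

theorem last_comm (i j : ℕ) (f : Bool) : last i (last j f) = last j (last i f) := by
  induction i generalizing f with
  | zero => rw [last, last, last_not]
  | succ i ih => rw [last, last, ← last_not, ih]

/-- Apply the alternating word of length `j` starting with `f`. -/
def runR (m : ℕ) : ℕ → Bool → R → R
  | 0, _, s => s
  | j + 1, f, s => runR m j (!f) (fwd m f s)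

theorem runR_add (m i j : ℕ) (f : Bool) (s : R) :
    runR m (i + j) f s = runR m j (!last i f) (runR m i f s) := by
  induction i generalizing f s with
  | zero => simp [runR, last]
  | succ i ih => rw [Nat.succ_add, runR, ih]; rfl

theorem runR_lt (m j : ℕ) (f : Bool) (k : ℤ) (q : ℕ) (ps : List ℕ) (h : q + j < m) :
    runR m j f (k, q :: ps, !f) = (k, (q + j) :: ps, last j f) := by
  induction j generalizing q f with
  | zero => rfl
  | succ j ih =>
    have hf : (!f) ≠ f := by cases f <;> simp
    have h1 : q + 1 < m := by omega
    have := ih (!f) (q + 1) (by omega)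
    rw [Bool.not_not] at this
    rw [runR, fwd, if_neg hf, if_pos h1, this, last]
    congr 3
    omega

theorem runR_eq (m j : ℕ) (f : Bool) (k : ℤ) (q : ℕ) (ps : List ℕ) (h : q + j = m) (hj : j ≠ 0) :
    runR m j f (k, q :: ps, !f) = (k + 1, ps, nb ps (!last j f)) := by
  obtain ⟨j, rfl⟩ := Nat.exists_eq_succ_of_ne_zero hj
  have e : runR m (j + 1) f (k, q :: ps, !f) =
      runR m 1 (!last j f) (runR m j f (k, q :: ps, !f)) := runR_add m j 1 f _
  have hf : last j f ≠ !last j f := by cases last j f <;> simp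
  have h1 : ¬ (q + j + 1 < m) := by omega
  rw [Nat.succ_eq_add_one, e, runR_lt m j f k q ps (by omega), runR, runR, fwd, if_neg hf, if_neg h1,
    last_succ]

theorem fwd_nb (m : ℕ) (f : Bool) (k : ℤ) (ps : List ℕ) :
    fwd m f (k, ps, nb ps f) = (k, 1 :: ps, f) := by
  cases ps <;> simp [fwd, nb]

theorem runR_new (m j : ℕ) (f : Bool) (k : ℤ) (ps : List ℕ) (h : j < m) (hj : j ≠ 0) :
    runR m j f (k, ps, nb ps f) = (k, j :: ps, last j f) := by
  obtain ⟨j, rfl⟩ := Nat.exists_eq_succ_of_ne_zero hj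
  have := runR_lt m j (!f) k 1 ps (by omega)
  rw [Bool.not_not] at this
  rw [Nat.succ_eq_add_one, runR, fwd_nb, this, last]
  congr 3
  omega

theorem runR_full (m : ℕ) (hm : 3 ≤ m) (f : Bool) (k : ℤ) (ps : List ℕ) :
    runR m m f (k, ps, nb ps f) = (k + 1, ps, nb ps (!last m f)) := by
  obtain ⟨j, rfl⟩ : ∃ j, m = j + 1 := ⟨m - 1, by omega⟩
  have := runR_eq (j + 1) j (!f) k 1 ps (by omega) (by omega)
  rw [Bool.not_not] at this
  rw [runR, fwd_nb, this, last]

theorem runR_braid {m : ℕ} (hm : 3 ≤ m) {s : R} (hs : OK m s) (f : Bool) :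
    runR m m f s = runR m m (!f) s := by
  obtain ⟨k, ps, b⟩ := s
  obtain ⟨h1, h2⟩ := hs
  cases ps with
  | nil =>
    have hb : true = b := h2
    subst hb
    exact (runR_full m hm f k []).trans (runR_full m hm (!f) k []).symm
  | cons q qs =>
    simp only [List.mem_cons, forall_eq_or_imp] at h1
    have main : runR m m b (k, q :: qs, b) = runR m m (!b) (k, q :: qs, b) := by
      have e1 := runR_full m hm b k (q :: qs)
      have e2 := runR_eq m (m - q) (!b) k q qs (by omega) (by omega)
      rw [Bool.not_not] at e2
      have e3 := runR_add m (m - q) q (!b) (k, q :: qs, b)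
      rw [e2, runR_new m q _ _ _ (by omega) (by omega), ← last_add,
        show m - q + q = m by omega, last_not] at e3
      exact e1.trans e3.symm
    by_cases hf : f = b
    · subst hf; exact main
    · have : f = !b := by cases f <;> cases b <;> simp_all
      subst this
      rw [Bool.not_not]
      exact main.symm

section ev

variable {Γ : Type} [Group Γ] (u : Bool → Γ)

/-- Alternating product. -/
def W : ℕ → Bool → Γ
  | 0, _ => 1
  | j + 1, f => u f * W j (!f)

theorem W_succ (j : ℕ) (f : Bool) : W u (j + 1) f = W u j f * u (!last j f) := by
  induction j generalizing f with
  | zero => simp [W, last]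
  | succ j ih => rw [W, ih, W, mul_assoc]; rfl

/-- Evaluation of a state. -/
def evR (m : ℕ) (k : ℤ) : List ℕ → Bool → Γ
  | [], _ => W u m true ^ k
  | p :: ps, b => evR m k ps (last p b) * W u p (last p b)

theorem evR_nb (m : ℕ) (k : ℤ) (ps : List ℕ) (b : Bool) : evR u m k ps (nb ps b) = evR u m k ps b := by
  cases ps <;> rfl

variable {u} {m : ℕ}

theorem W_any (hu : W u m true = W u m false) (f : Bool) : W u m f = W u m true := by cases f <;> simp [hu]

theorem u_Δ (hu : W u m true = W u m false) (f : Bool) : u f * W u m true = W u m true * u (last m (!f)) := by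
  have h1 := W_succ u m f
  rw [W, W_any hu, W_any hu] at h1
  rw [h1, last_not, W_any hu f]

theorem W_Δ (hu : W u m true = W u m false) (p : ℕ) (f : Bool) : W u p f * W u m true = W u m true * W u p (last m (!f)) := by
  induction p generalizing f with
  | zero => simp [W]
  | succ p ih => rw [W, W, mul_assoc, ih, ← mul_assoc, u_Δ hu, mul_assoc, ← last_not]

theorem evR_Δ (hu : W u m true = W u m false) (k : ℤ) (ps : List ℕ) (f : Bool) :
    evR u m k ps f * W u m true = evR u m (k + 1) ps (last m (!f)) := by
  induction ps generalizing f with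
  | nil => simp [evR, zpow_add_one]
  | cons p ps ih =>
    rw [evR, mul_assoc, W_Δ hu, ← mul_assoc, ih, evR, ← last_not, last_comm]

theorem evR_fwd (hu : W u m true = W u m false) (c : Bool) (s : R) (hs : OK m s) :
    evR u m (fwd m c s).1 (fwd m c s).2.1 (fwd m c s).2.2 = evR u m s.1 s.2.1 s.2.2 * u c := by
  obtain ⟨k, ps, b⟩ := s
  obtain ⟨h1, h2⟩ := hs
  cases ps with
  | nil => simp [fwd, evR, W, last]
  | cons p ps =>
    simp only [List.mem_cons, forall_eq_or_imp] at h1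
    by_cases hb : b = c
    · subst hb
      simp [fwd, evR, W, last]
    · have hb' : b = !c := by cases b <;> cases c <;> simp_all
      subst hb'
      by_cases hp : p + 1 < m
      · simp only [fwd, if_neg hb, if_pos hp, evR]
        rw [W_succ, last]
        simp only [last_last, Bool.not_not, mul_assoc]
      · simp only [fwd, if_neg hb, if_neg hp, evR]
        have hm : m = p + 1 := by omega
        have e := W_succ u p (last p (!c))
        rw [last_last, Bool.not_not, ← hm, W_any hu] at e
        rw [mul_assoc, ← e, evR_Δ hu, evR_nb]
        congr 1
        subst hm
        simp only [last_succ, last_not, last_last, Bool.not_not]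

end ev

end DihFin

/-! ### The free model -/

namespace DihFree

/-- Signed letters. -/
abbrev Lt := Bool × Bool

/-- Inverse letter. -/
def iv (a : Lt) : Lt := (a.1, !a.2)

theorem iv_iv (a : Lt) : iv (iv a) = a := by simp [iv]

theorem iv_ne (a : Lt) : iv a ≠ a := by
  obtain ⟨b, s⟩ := a
  cases s <;> simp [iv]

/-- Reduced words (last letter first). -/
def Red : List Lt → Prop
  | [] => True
  | a :: t => t.head? ≠ some (iv a) ∧ Red t

/-- Right multiplication by a letter. -/
def push (a : Lt) (l : List Lt) : List Lt :=
  if l.head? = some (iv a) then l.tail else a :: l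

theorem Red_tail {l : List Lt} (h : Red l) : Red l.tail := by
  cases l with
  | nil => exact h
  | cons a t => exact h.2

theorem Red_push (a : Lt) {l : List Lt} (h : Red l) : Red (push a l) := by
  unfold push
  split_ifs with h1
  · exact Red_tail h
  · exact ⟨h1, h⟩

theorem push_push (a : Lt) {l : List Lt} (h : Red l) : push (iv a) (push a l) = l := by
  unfold push
  split_ifs with h1 h2 h2
  · rw [iv_iv] at h2
    cases l with
    | nil => simp at h1
    | cons x t =>
      simp only [List.head?_cons, Option.some.injEq] at h1
      subst h1
      have := h.1
      rw [iv_iv] at this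
      exact absurd h2 this
  · cases l with
    | nil => simp at h1
    | cons x t =>
      simp only [List.head?_cons, Option.some.injEq] at h1
      subst h1
      rfl
  · rfl
  · simp [iv_iv] at h2

/-- State space. -/
abbrev St := {l : List Lt // Red l}

/-- Right multiplication by a generator. -/
def act (c : Bool) : Equiv.Perm St where
  toFun s := ⟨push (c, true) s.1, Red_push _ s.2⟩
  invFun s := ⟨push (c, false) s.1, Red_push _ s.2⟩
  left_inv s := Subtype.ext (push_push (c, true) s.2)
  right_inv s := Subtype.ext (push_push (c, false) s.2)

/-- Signed version. -/
def sact (a : Lt) : Equiv.Perm St := if a.2 then act a.1 else (act a.1)⁻¹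

theorem sact_val (a : Lt) (z : St) : (sact a z).1 = push a z.1 := by
  obtain ⟨b, s⟩ := a
  cases s <;> rfl

/-- Length. -/
def len (z : St) : ℕ := z.1.length

theorem len_sact (a : Lt) (z : St) :
    (z.1.head? = some (iv a) ∧ len z = len (sact a z) + 1) ∨
    (z.1.head? ≠ some (iv a) ∧ len (sact a z) = len z + 1) := by
  unfold len
  rw [sact_val]
  obtain ⟨l, hl⟩ := z
  unfold push
  split_ifs with h1
  · left
    refine ⟨h1, ?_⟩
    cases l with
    | nil => simp at h1
    | cons x t => simp
  · right
    exact ⟨h1, by simp⟩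

theorem nopeak (b : Bool) (z : St) :
    ¬ (len (act b z) < len z ∧ len ((act b)⁻¹ z) < len z) := by
  rintro ⟨h1, h2⟩
  have e1 := len_sact (b, true) z
  have e2 := len_sact (b, false) z
  change (_ ∧ len z = len (act b z) + 1) ∨ (_ ∧ len (act b z) = len z + 1) at e1
  change (_ ∧ len z = len ((act b)⁻¹ z) + 1) ∨ (_ ∧ len ((act b)⁻¹ z) = len z + 1) at e2
  rcases e1 with e1 | e1
  · rcases e2 with e2 | e2
    · have := e1.1.symm.trans e2.1
      simp [iv] at this
    · omega
  · omega

/-- The base state. -/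
def base : St := ⟨[], trivial⟩

theorem desc (z : St) (hz : z ≠ base) : ∃ b, len (act b z) < len z ∨ len ((act b)⁻¹ z) < len z := by
  obtain ⟨l, hl⟩ := z
  cases l with
  | nil => exact absurd rfl hz
  | cons a t =>
    obtain ⟨b, s⟩ := a
    refine ⟨b, ?_⟩
    have e := len_sact (iv (b, s)) ⟨(b, s) :: t, hl⟩
    rw [iv_iv] at e
    rcases e with e | e
    · cases s
      · left
        change _ ∧ _ = len (act b _) + 1 at e
        omega
      · right
        change _ ∧ _ = len ((act b)⁻¹ _) + 1 at e
        omega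
    · exact absurd rfl e.1

theorem sact_pow (a : Lt) (n : ℕ) (z : St) (h : ∀ x ∈ z.1.head?, x.1 ≠ a.1) :
    ((sact a ^ n) z).1 = List.replicate n a ++ z.1 := by
  induction n with
  | zero => simp
  | succ n ih =>
    rw [pow_succ', Equiv.Perm.mul_apply, sact_val, ih]
    have : ¬ (List.replicate n a ++ z.1).head? = some (iv a) := by
      cases n with
      | zero =>
        intro hh
        exact h (iv a) (by simpa using hh) rfl
      | succ n =>
        intro hh
        simp only [List.replicate_succ, List.cons_append, List.head?_cons, Option.some.injEq] at hh
        exact iv_ne a hh.symm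
    rw [push, if_neg this]
    simp [List.replicate_succ]

theorem zpow_eq (b : Bool) (t : ℤ) : ∃ s, act b ^ t = sact (b, s) ^ t.natAbs := by
  obtain ⟨n, rfl | rfl⟩ := Int.eq_nat_or_neg t
  · exact ⟨true, by simp [sact]⟩
  · exact ⟨false, by simp [sact]⟩

theorem two (b : Bool) (t f : ℤ) (ht : t ≠ 0) :
    len ((act (!b) ^ t) ((act b ^ f) base)) <
      len (act b ((act (!b) ^ t) ((act b ^ f) base))) ∧
    len ((act (!b) ^ t) ((act b ^ f) base)) <
      len ((act b)⁻¹ ((act (!b) ^ t) ((act b ^ f) base))) := by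
  obtain ⟨s, hs⟩ := zpow_eq (!b) t
  obtain ⟨r, hr⟩ := zpow_eq b f
  have hbb : b ≠ !b := by cases b <;> simp
  have e1 := sact_pow (b, r) f.natAbs base (by simp [base])
  rw [← hr] at e1
  have e2 := sact_pow (!b, s) t.natAbs ((act b ^ f) base) (by
    rw [e1]
    cases f.natAbs with
    | zero => simp [base]
    | succ n => simp [List.replicate_succ])
  rw [← hs] at e2
  obtain ⟨n, hn⟩ := Nat.exists_eq_succ_of_ne_zero (Int.natAbs_ne_zero.mpr ht)
  rw [hn, List.replicate_succ, List.cons_append] at e2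
  generalize (act (!b) ^ t) ((act b ^ f) base) = z at e2
  have hd : ∀ s', z.1.head? ≠ some (b, s') := by
    intro s' hh
    rw [e2] at hh
    simp only [List.head?_cons, Option.some.injEq, Prod.mk.injEq] at hh
    exact hbb hh.1.symm
  constructor
  · have e := len_sact (b, true) z
    rcases e with e | e
    · exact absurd e.1 (hd _)
    · change _ ∧ len (act b z) = _ at e
      omega
  · have e := len_sact (b, false) z
    rcases e with e | e
    · exact absurd e.1 (hd _)
    · change _ ∧ len ((act b)⁻¹ z) = _ at e
      omega

theorem step (b : Bool) (z : St) : len (act b z) = len z + 1 ∨ len z = len (act b z) + 1 := by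
  have e := len_sact (b, true) z
  change (_ ∧ len z = len (act b z) + 1) ∨ (_ ∧ len (act b z) = len z + 1) at e
  omega

/-- The free dihedral data. -/
def data : Dih where
  S := St
  o := base
  A := act
  l := len
  l_o := rfl
  step := step
  nopeak := nopeak
  desc := desc
  two := two

variable {Γ : Type} [Group Γ] (u : Bool → Γ)

/-- Evaluation of letters. -/
def lev (a : Lt) : Γ := if a.2 then u a.1 else (u a.1)⁻¹

theorem lev_iv (a : Lt) : lev u (iv a) = (lev u a)⁻¹ := by
  obtain ⟨b, s⟩ := a
  cases s <;> simp [lev, iv]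

/-- Evaluation. -/
def ev : List Lt → Γ
  | [] => 1
  | a :: t => ev t * lev u a

theorem ev_push (a : Lt) (l : List Lt) : ev u (push a l) = ev u l * lev u a := by
  unfold push
  split_ifs with h
  · cases l with
    | nil => simp at h
    | cons x t =>
      simp only [List.head?_cons, Option.some.injEq] at h
      subst h
      simp [ev, lev_iv]
  · rfl

end DihFree

/-! ### The action on valid normal forms -/

namespace Node

variable {Q : Sys}

/-- Valid normal forms. -/
abbrev X (Q : Sys) := {x : Node Q // Valid x}

theorem exists_mv (hcov : ∀ i, ∃ p b, Q.pt p b = i) (i : Q.I) (t : ℤ) (x : X Q) :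
    ∃ y : X Q, ∀ p b, Q.pt p b = i →
      gate y.1 p = gate x.1 p ∧ h y.1 p = ((Q.D p).A b ^ t) (h x.1 p) := by
  obtain ⟨p, b, rfl⟩ := hcov i
  have key : ∀ q c, Valid (att q (gate x.1 q) (((Q.D q).A c ^ t) (h x.1 q))) ∧
      gate (att q (gate x.1 q) (((Q.D q).A c ^ t) (h x.1 q))) q = gate x.1 q ∧
      h (att q (gate x.1 q) (((Q.D q).A c ^ t) (h x.1 q))) q =
        ((Q.D q).A c ^ t) (h x.1 q) := by
    intro q c
    obtain ⟨g1, g2, -⟩ := gs x.1 x.2 q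
    obtain ⟨a1, a2, a3, -⟩ := as q (gate x.1 q) (((Q.D q).A c ^ t) (h x.1 q)) g1 g2
    exact ⟨a1, a3, a2⟩
  refine ⟨⟨_, (key p b).1⟩, ?_⟩
  intro q c hqc
  have := (key q c).2
  rw [act_indep x.1 x.2 q p c b hqc t] at this
  exact this

/-- Right multiplication by a power of a generator. -/
noncomputable def mv (hcov : ∀ i, ∃ p b, Q.pt p b = i) (i : Q.I) (t : ℤ) (x : X Q) : X Q :=
  (exists_mv hcov i t x).choose

theorem mv_spec (hcov : ∀ i, ∃ p b, Q.pt p b = i) (p : Q.P) (b : Bool) (t : ℤ) (x : X Q) :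
    gate (mv hcov (Q.pt p b) t x).1 p = gate x.1 p ∧
      h (mv hcov (Q.pt p b) t x).1 p = ((Q.D p).A b ^ t) (h x.1 p) :=
  (exists_mv hcov (Q.pt p b) t x).choose_spec p b rfl

theorem X_ext (p : Q.P) (x y : X Q) (hg : gate x.1 p = gate y.1 p) (hh : h x.1 p = h y.1 p) :
    x = y := Subtype.ext (ext_gate p x.1 y.1 x.2 y.2 hg hh)

theorem mv_mv (hcov : ∀ i, ∃ p b, Q.pt p b = i) (i : Q.I) (t s : ℤ) (hts : t + s = 0) (x : X Q) :
    mv hcov i t (mv hcov i s x) = x := by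
  obtain ⟨p, b, rfl⟩ := hcov i
  have h1 := mv_spec hcov p b t (mv hcov (Q.pt p b) s x)
  have h2 := mv_spec hcov p b s x
  apply X_ext p
  · rw [h1.1, h2.1]
  · rw [h1.2, h2.2, ← Equiv.Perm.mul_apply, ← zpow_add, hts]
    simp

/-- Right multiplication by a generator. -/
noncomputable def T (hcov : ∀ i, ∃ p b, Q.pt p b = i) (i : Q.I) : Equiv.Perm (X Q) where
  toFun := mv hcov i 1
  invFun := mv hcov i (-1)
  left_inv := mv_mv hcov i (-1) 1 (by norm_num)
  right_inv := mv_mv hcov i 1 (-1) (by norm_num)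

section

variable (hcov : ∀ i, ∃ p b, Q.pt p b = i)

theorem T_spec (p : Q.P) (b : Bool) (x : X Q) :
    gate (T hcov (Q.pt p b) x).1 p = gate x.1 p ∧
      h (T hcov (Q.pt p b) x).1 p = (Q.D p).A b (h x.1 p) := by
  have := mv_spec hcov p b 1 x
  rw [zpow_one] at this
  exact this

theorem T_inv_spec (p : Q.P) (b : Bool) (x : X Q) :
    gate ((T hcov (Q.pt p b))⁻¹ x).1 p = gate x.1 p ∧
      h ((T hcov (Q.pt p b))⁻¹ x).1 p = ((Q.D p).A b)⁻¹ (h x.1 p) := by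
  have := mv_spec hcov p b (-1) x
  rw [zpow_neg, zpow_one] at this
  exact this

theorem T_pow_spec (p : Q.P) (b : Bool) (x : X Q) (n : ℕ) :
    gate ((T hcov (Q.pt p b) ^ n) x).1 p = gate x.1 p ∧
      h ((T hcov (Q.pt p b) ^ n) x).1 p = ((Q.D p).A b ^ n) (h x.1 p) := by
  induction n with
  | zero => simp
  | succ n ih =>
    have := T_spec hcov p b ((T hcov (Q.pt p b) ^ n) x)
    rw [pow_succ', Equiv.Perm.mul_apply, pow_succ', Equiv.Perm.mul_apply, this.1, this.2, ih.1, ih.2]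
    exact ⟨rfl, rfl⟩

theorem T_inv_pow_spec (p : Q.P) (b : Bool) (x : X Q) (n : ℕ) :
    gate (((T hcov (Q.pt p b))⁻¹ ^ n) x).1 p = gate x.1 p ∧
      h (((T hcov (Q.pt p b))⁻¹ ^ n) x).1 p = (((Q.D p).A b)⁻¹ ^ n) (h x.1 p) := by
  induction n with
  | zero => simp
  | succ n ih =>
    have := T_inv_spec hcov p b (((T hcov (Q.pt p b))⁻¹ ^ n) x)
    rw [pow_succ', Equiv.Perm.mul_apply, pow_succ', Equiv.Perm.mul_apply, this.1, this.2, ih.1, ih.2]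
    exact ⟨rfl, rfl⟩

theorem len_eq (p : Q.P) (x : X Q) : len x.1 = len (gate x.1 p) + (Q.D p).l (h x.1 p) :=
  (gs x.1 x.2 p).2.2.2.1.symm

theorem eval_eq (p : Q.P) (x : X Q) : eval x.1 = eval (gate x.1 p) * Q.ev p (h x.1 p) :=
  (gs x.1 x.2 p).2.2.2.2.symm

theorem eval_T (i : Q.I) (x : X Q) : eval (T hcov i x).1 = eval x.1 * Q.γ i := by
  obtain ⟨p, b, rfl⟩ := hcov i
  have := T_spec hcov p b x
  rw [eval_eq p, eval_eq p x, this.1, this.2, Q.ev_A, mul_assoc]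

theorem eval_T_inv (i : Q.I) (x : X Q) : eval ((T hcov i)⁻¹ x).1 = eval x.1 * (Q.γ i)⁻¹ := by
  have := eval_T hcov i ((T hcov i)⁻¹ x)
  rw [perm_apply_inv] at this
  rw [this, mul_inv_cancel_right]

theorem len_T (i : Q.I) (x : X Q) :
    len (T hcov i x).1 = len x.1 + 1 ∨ len x.1 = len (T hcov i x).1 + 1 := by
  obtain ⟨p, b, rfl⟩ := hcov i
  have := T_spec hcov p b x
  rw [len_eq p, len_eq p x, this.1, this.2]
  have := (Q.D p).step b (h x.1 p)
  omega

theorem len_T_inv (i : Q.I) (x : X Q) :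
    len ((T hcov i)⁻¹ x).1 = len x.1 + 1 ∨ len x.1 = len ((T hcov i)⁻¹ x).1 + 1 := by
  have := len_T hcov i ((T hcov i)⁻¹ x)
  rw [perm_apply_inv] at this
  omega

theorem len_T_pow (i : Q.I) (x : X Q) (hup : len x.1 < len (T hcov i x).1) (n : ℕ) :
    len ((T hcov i ^ n) x).1 = len x.1 + n := by
  obtain ⟨p, b, rfl⟩ := hcov i
  have h1 := T_spec hcov p b x
  have h2 := T_pow_spec hcov p b x n
  rw [len_eq p, len_eq p x, h2.1, h2.2]
  rw [len_eq p, len_eq p (T _ _ _), h1.1, h1.2] at hup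
  have := ((Q.D p).up_pow b (h x.1 p) (by omega) n).1
  omega

theorem len_T_inv_pow (i : Q.I) (x : X Q) (hup : len x.1 < len ((T hcov i)⁻¹ x).1) (n : ℕ) :
    len (((T hcov i)⁻¹ ^ n) x).1 = len x.1 + n := by
  obtain ⟨p, b, rfl⟩ := hcov i
  have h1 := T_inv_spec hcov p b x
  have h2 := T_inv_pow_spec hcov p b x n
  rw [len_eq p, len_eq p x, h2.1, h2.2]
  rw [len_eq p, len_eq p ((T _ _)⁻¹ _), h1.1, h1.2] at hup
  have := ((Q.D p).down_pow b (h x.1 p) (by omega) n).1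
  omega

theorem exists_desc (x : X Q) (hx : x.1 ≠ one) :
    ∃ i, len (T hcov i x).1 < len x.1 ∨ len ((T hcov i)⁻¹ x).1 < len x.1 := by
  have key : ∃ p, h x.1 p ≠ (Q.D p).o := by
    obtain ⟨x, hv⟩ := x
    cases x with
    | one => exact absurd rfl hx
    | cyc y i t =>
      obtain ⟨p, b, rfl⟩ := hcov i
      refine ⟨p, fun hh => ?_⟩
      have e := e_h _ hv p b
      simp only at hh
      rw [hh, Dih.e_o, eps_cyc_self] at e
      exact hv.2.1 e.symm
    | dih y p z =>
      refine ⟨p, fun hh => ?_⟩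
      simp only [h_dih] at hh
      have e := hv.2.2 true
      rw [hh, Dih.e_o] at e
      exact e rfl
  obtain ⟨p, hp⟩ := key
  obtain ⟨b, hb⟩ := (Q.D p).desc _ hp
  refine ⟨Q.pt p b, ?_⟩
  have h1 := T_spec hcov p b x
  have h2 := T_inv_spec hcov p b x
  rw [len_eq p x, len_eq p (T _ _ x), len_eq p ((T _ _)⁻¹ x), h1.1, h1.2, h2.1, h2.2]
  omega

end

end Node

/-- Apply an alternating word. -/
def Dih.run (D : Dih) : ℕ → Bool → D.S → D.S
  | 0, _, z => z
  | j + 1, f, z => D.run j (!f) (D.A f z)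

/-! ### The Artin group -/

theorem map_altProd {G H : Type*} [Monoid G] [Monoid H] (f : G →* H) (m : ℕ) (x y : G) :
    f (altProd m x y) = altProd m (f x) (f y) := by
  induction m generalizing x y with
  | zero => simp [altProd]
  | succ m ih => rw [altProd, altProd, map_mul, ih]

theorem W_eq {Γ : Type} [Group Γ] (u : Bool → Γ) (m : ℕ) (f : Bool) :
    DihFin.W u m f = altProd m (u f) (u (!f)) := by
  induction m generalizing f with
  | zero => rfl
  | succ m ih => rw [DihFin.W, ih, Bool.not_not, altProd]

theorem gen_braid {n : ℕ} {M : Fin n → Fin n → ℕ∞} {i j : Fin n} (hij : i ≠ j) {m : ℕ}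
    (hm : M i j = m) :
    altProd m (gen n M i) (gen n M j) = altProd m (gen n M j) (gen n M i) := by
  have h1 : PresentedGroup.mk (artinRels n M) (altProd m (FreeGroup.of i) (FreeGroup.of j) *
      (altProd m (FreeGroup.of j) (FreeGroup.of i))⁻¹) = 1 :=
    PresentedGroup.one_of_mem ⟨i, j, hij, m, hm, rfl⟩
  rw [map_mul, map_inv, mul_inv_eq_one, map_altProd, map_altProd] at h1
  exact h1

theorem run_val {m : ℕ} (hm : 3 ≤ m) (j : ℕ) (f : Bool) (z : DihFin.St m) :
    ((DihFin.data hm).run j f z).1 = DihFin.runR m j f z.1 := by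
  induction j generalizing f z with
  | zero => rfl
  | succ j ih => exact ih (!f) _

/-- Dihedral data with an evaluation, for a given label. -/
theorem exists_data {Γ : Type} [Group Γ] (u : Bool → Γ) (μ : ℕ∞) (hμ : 3 ≤ μ)
    (hu : ∀ m : ℕ, μ = m → altProd m (u true) (u false) = altProd m (u false) (u true)) :
    ∃ (D : Dih) (ev : D.S → Γ), ev D.o = 1 ∧ (∀ b z, ev (D.A b z) = ev z * u b) ∧
      ∀ m : ℕ, μ = m → ∀ z, D.run m true z = D.run m false z := by
  induction μ using ENat.recTopCoe with
  | top =>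
    refine ⟨DihFree.data, fun z => DihFree.ev u z.1, rfl, ?_, ?_⟩
    · intro b z
      exact DihFree.ev_push u (b, true) z.1
    · intro m hm
      exact absurd hm.symm (ENat.natCast_ne_top m)
  | coe m =>
    have hm : 3 ≤ m := by exact_mod_cast hμ
    have hW : DihFin.W u m true = DihFin.W u m false := by
      rw [W_eq, W_eq]
      exact hu m rfl
    refine ⟨DihFin.data hm, fun z => DihFin.evR u m z.1.1 z.1.2.1 z.1.2.2, ?_, ?_, ?_⟩
    · exact zpow_zero _
    · intro b z
      exact DihFin.evR_fwd hW b z.1 z.2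
    · intro m' hm' z
      have : m = m' := by exact_mod_cast hm'
      subst this
      apply Subtype.ext
      exact (run_val hm m true z).trans
        ((DihFin.runR_braid hm z.2 true).trans (run_val hm m false z).symm)

/-- Pairs of generators. -/
abbrev Pair (n : ℕ) := {q : Fin n × Fin n // q.1 < q.2}

/-- Members of a pair. -/
def pairPt {n : ℕ} (p : Pair n) (b : Bool) : Fin n := if b then p.1.2 else p.1.1

theorem exists_sys (n : ℕ) (M : Fin n → Fin n → ℕ∞) (hlarge : ∀ i j, i ≠ j → 3 ≤ M i j) :
    ∃ (D : Pair n → Dih) (ev : ∀ p, (D p).S → ArtinGroup n M),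
      (∀ p, ev p (D p).o = 1) ∧
      (∀ p b z, ev p ((D p).A b z) = ev p z * gen n M (pairPt p b)) ∧
      ∀ p : Pair n, ∀ m : ℕ, M p.1.1 p.1.2 = m → ∀ z, (D p).run m true z = (D p).run m false z := by
  have : ∀ p : Pair n, ∃ (D : Dih) (ev : D.S → ArtinGroup n M), ev D.o = 1 ∧
      (∀ b z, ev (D.A b z) = ev z * gen n M (pairPt p b)) ∧
      ∀ m : ℕ, M p.1.1 p.1.2 = m → ∀ z, D.run m true z = D.run m false z := by
    intro p
    apply exists_data (fun b => gen n M (pairPt p b)) _ (hlarge _ _ p.2.ne)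
    intro m hm
    exact (gen_braid p.2.ne hm).symm
  choose D ev h1 h2 h3 using this
  exact ⟨D, ev, h1, h2, h3⟩

theorem pair_line {n : ℕ} (p q : Pair n) (b c c' : Bool) (hpq : p ≠ q)
    (h1 : pairPt p b = pairPt q c) : pairPt p (!b) ≠ pairPt q c' := by
  intro h2
  apply hpq
  obtain ⟨⟨p1, p2⟩, hp⟩ := p
  obtain ⟨⟨q1, q2⟩, hq⟩ := q
  simp only at hp hq
  apply Subtype.ext
  cases b <;> cases c <;> cases c' <;>
    simp only [pairPt, Bool.not_true, Bool.not_false, if_true, if_false, Bool.false_eq_true] at h1 h2 <;>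
    simp only [Prod.mk.injEq] <;> omega

theorem pair_cov {n : ℕ} (hn : 2 ≤ n) (i : Fin n) : ∃ (p : Pair n) (b : Bool), pairPt p b = i := by
  have : Nontrivial (Fin n) := Fin.nontrivial_iff_two_le.mpr hn
  obtain ⟨j, hj⟩ := exists_ne i
  rcases lt_or_gt_of_ne hj with h | h
  · exact ⟨⟨(j, i), h⟩, true, rfl⟩
  · exact ⟨⟨(i, j), h⟩, false, rfl⟩

/-- The abstract outcome: a set with an action of the Artin group computing the word length. -/
theorem exists_action (n : ℕ) (hn : 2 ≤ n) (M : Fin n → Fin n → ℕ∞)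
    (hsymm : ∀ i j, M i j = M j i) (hlarge : ∀ i j, i ≠ j → 3 ≤ M i j) :
    ∃ (X : Type) (x₀ : X) (len : X → ℕ) (ev : X → ArtinGroup n M) (T : Fin n → Equiv.Perm X),
      len x₀ = 0 ∧ ev x₀ = 1 ∧
      (∀ i x, ev (T i x) = ev x * gen n M i) ∧
      (∀ i x, len (T i x) = len x + 1 ∨ len x = len (T i x) + 1) ∧
      (∀ i x, len x < len (T i x) → ∀ k, len ((T i ^ k) x) = len x + k) ∧
      (∀ i x, len x < len ((T i)⁻¹ x) → ∀ k, len (((T i)⁻¹ ^ k) x) = len x + k) ∧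
      (∀ x, x ≠ x₀ → ∃ i, len (T i x) < len x ∨ len ((T i)⁻¹ x) < len x) ∧
      ∃ φ : ArtinGroup n M →* (Equiv.Perm X)ᵐᵒᵖ, ∀ i, φ (gen n M i) = MulOpposite.op (T i) := by
  obtain ⟨D, ev, h1, h2, h3⟩ := exists_sys n M hlarge
  let Q : Sys :=
    { I := Fin n
      P := Pair n
      pt := pairPt
      D := D
      pt_ne := by
        intro p b
        cases b
        · exact p.2.ne'
        · exact p.2.ne
      line := pair_line
      Γ := ArtinGroup n M
      grp := inferInstance
      γ := gen n M
      ev := ev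
      ev_o := h1
      ev_A := h2 }
  have hcov : ∀ i : Q.I, ∃ (p : Q.P) (b : Bool), Q.pt p b = i := pair_cov hn
  have hrun : ∀ (p : Q.P) (j : ℕ) (f : Bool) (x : Node.X Q),
      Node.gate ((altProd j (MulOpposite.op (Node.T hcov (Q.pt p f)))
        (MulOpposite.op (Node.T hcov (Q.pt p (!f))))).unop x).1 p = Node.gate x.1 p ∧
      Node.h ((altProd j (MulOpposite.op (Node.T hcov (Q.pt p f)))
        (MulOpposite.op (Node.T hcov (Q.pt p (!f))))).unop x).1 p =
          (Q.D p).run j f (Node.h x.1 p) := by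
    intro p j
    induction j with
    | zero => intro f x; exact ⟨rfl, rfl⟩
    | succ j ih =>
      intro f x
      have := ih (!f) (Node.T hcov (Q.pt p f) x)
      rw [Bool.not_not] at this
      have hs := Node.T_spec hcov p f x
      rw [hs.1, hs.2] at this
      rw [altProd, MulOpposite.unop_mul, Equiv.Perm.mul_apply]
      exact this
  have hbr : ∀ p : Pair n, ∀ m : ℕ, M p.1.1 p.1.2 = m →
      altProd m (MulOpposite.op (Node.T hcov p.1.1)) (MulOpposite.op (Node.T hcov p.1.2)) =
      altProd m (MulOpposite.op (Node.T hcov p.1.2)) (MulOpposite.op (Node.T hcov p.1.1)) := by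
    intro p m hm
    apply MulOpposite.unop_injective
    ext1 x
    have e1 := hrun p m false x
    have e2 := hrun p m true x
    apply Node.X_ext (Q := Q) p
    · exact e1.1.trans e2.1.symm
    · refine e1.2.trans (Eq.trans ?_ e2.2.symm)
      exact (h3 p m hm _).symm
  have hrel : ∀ r ∈ artinRels n M,
      FreeGroup.lift (fun i => MulOpposite.op (Node.T (Q := Q) hcov i)) r = 1 := by
    rintro r ⟨i, j, hij, m, hm, rfl⟩
    rw [map_mul, map_inv, mul_inv_eq_one, map_altProd, map_altProd]
    simp only [FreeGroup.lift_apply_of]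
    rcases lt_or_gt_of_ne hij with h | h
    · exact hbr ⟨(i, j), h⟩ m hm
    · exact (hbr ⟨(j, i), h⟩ m ((hsymm j i).trans hm)).symm
  refine ⟨Node.X Q, ⟨Node.one, trivial⟩, fun x => Node.len x.1, fun x => Node.eval x.1,
    Node.T hcov, rfl, rfl, Node.eval_T hcov, Node.len_T hcov, Node.len_T_pow hcov,
    Node.len_T_inv_pow hcov, ?_, PresentedGroup.toGroup hrel, ?_⟩
  · intro x hx
    exact Node.exists_desc hcov x (fun h => hx (Subtype.ext h))
  · intro i
    exact PresentedGroup.toGroup.of hrel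

theorem wordElt_append (n : ℕ) (M : Fin n → Fin n → ℕ∞) (v w : List (Letter n)) :
    wordElt n M (v ++ w) = wordElt n M v * wordElt n M w := by
  simp [wordElt]

theorem wordElt_replicate (n : ℕ) (M : Fin n → Fin n → ℕ∞) (k : ℕ) (a : Letter n) :
    wordElt n M (List.replicate k a) = toGen n M a ^ k := by
  simp [wordElt]

theorem wordLength_le (n : ℕ) (M : Fin n → Fin n → ℕ∞) (w : List (Letter n)) :
    wordLength (genSet n M) (wordElt n M w) ≤ w.length := by
  apply Nat.sInf_le
  refine ⟨w.map (toGen n M), ?_, by simp, rfl⟩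
  intro a ha
  simp only [List.mem_map] at ha
  obtain ⟨⟨i, s⟩, -, rfl⟩ := ha
  refine ⟨i, ?_⟩
  cases s <;> simp [toGen]

/-- **Corollary.** In an Artin group of large type, if `wa` is geodesic then so is
`w a^k` for every `k ≥ 1`. -/
theorem geodesic_append_replicate
    (n : ℕ) (hn : 2 ≤ n) (M : Fin n → Fin n → ℕ∞)
    (hsymm : ∀ i j, M i j = M j i)
    (hdiag : ∀ i, M i i = 1)
    (hlarge : ∀ i j, i ≠ j → 3 ≤ M i j)
    (w : List (Letter n)) (a : Letter n)
    (hgeod : IsGeodesic n M (w ++ [a]))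
    (k : ℕ) (hk : 1 ≤ k) :
    IsGeodesic n M (w ++ List.replicate k a) := by
  obtain ⟨X, x₀, len, ev, T, hlen0, hev0, hevT, hlenT, hpow, hipow, hdesc, φ, hφ⟩ :=
    exists_action n hn M hsymm hlarge
  have hlenT' : ∀ i x, len ((T i)⁻¹ x) = len x + 1 ∨ len x = len ((T i)⁻¹ x) + 1 := by
    intro i x
    have := hlenT i ((T i)⁻¹ x)
    rw [perm_apply_inv] at this
    omega
  have hevT' : ∀ i x, ev ((T i)⁻¹ x) = ev x * (gen n M i)⁻¹ := by
    intro i x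
    have := hevT i ((T i)⁻¹ x)
    rw [perm_apply_inv] at this
    rw [this, mul_inv_cancel_right]
  have hφ' : ∀ i, (φ (gen n M i)⁻¹).unop = (T i)⁻¹ := by
    intro i
    rw [map_inv, hφ]; rfl
  have hφ1 : ∀ i, (φ (gen n M i)).unop = T i := by
    intro i
    rw [hφ]; rfl
  have hmul : ∀ g g' x, (φ (g * g')).unop x = (φ g').unop ((φ g).unop x) := by
    intro g g' x
    rw [map_mul]; rfl
  -- every state is reached by a word of the right length
  have hword : ∀ N x, len x = N → ∃ v : List (Letter n), v.length = N ∧ wordElt n M v = ev x ∧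
      (φ (wordElt n M v)).unop x₀ = x := by
    intro N
    induction N using Nat.strong_induction_on with
    | _ N ih =>
      intro x hx
      by_cases h0 : x = x₀
      · subst h0
        refine ⟨[], ?_, ?_, ?_⟩
        · simp; omega
        · simp [wordElt, hev0]
        · simp [wordElt]
      · obtain ⟨i, hi | hi⟩ := hdesc x h0
        · obtain ⟨v, v1, v2, v3⟩ := ih _ (by omega) (T i x) rfl
          refine ⟨v ++ [(i, false)], ?_, ?_, ?_⟩
          · have := hlenT i x
            simp only [List.length_append, List.length_singleton]
            omega
          · rw [wordElt_append, v2, hevT]; simp [wordElt, toGen]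
          · have : wordElt n M [(i, false)] = (gen n M i)⁻¹ := by simp [wordElt, toGen]
            rw [wordElt_append, hmul, v3, this, hφ', perm_inv_apply]
        · obtain ⟨v, v1, v2, v3⟩ := ih _ (by omega) ((T i)⁻¹ x) rfl
          refine ⟨v ++ [(i, true)], ?_, ?_, ?_⟩
          · have := hlenT' i x
            simp only [List.length_append, List.length_singleton]
            omega
          · rw [wordElt_append, v2, hevT']; simp [wordElt, toGen]
          · have : wordElt n M [(i, true)] = gen n M i := by simp [wordElt, toGen]
            rw [wordElt_append, hmul, v3, this, hφ1, perm_apply_inv]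
  -- evaluation inverts the orbit map
  have hS : ∀ g ∈ genSet n M, ∀ x, ev ((φ g).unop x) = ev x * g ∧ len ((φ g).unop x) ≤ len x + 1 := by
    rintro g ⟨i, rfl | rfl⟩ x
    · rw [hφ1]
      have := hlenT i x
      exact ⟨hevT i x, by omega⟩
    · rw [hφ']
      have := hlenT' i x
      exact ⟨hevT' i x, by omega⟩
  have hlist : ∀ l : List (ArtinGroup n M), (∀ g ∈ l, g ∈ genSet n M) → ∀ x,
      ev ((φ l.prod).unop x) = ev x * l.prod ∧ len ((φ l.prod).unop x) ≤ len x + l.length := by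
    intro l
    induction l with
    | nil => intro _ x; simp
    | cons g l ih =>
      intro hl x
      simp only [List.mem_cons, forall_eq_or_imp] at hl
      have i1 := ih hl.2 ((φ g).unop x)
      have i2 := hS g hl.1 x
      rw [List.prod_cons, hmul, i1.1, i2.1, mul_assoc, List.length_cons]
      exact ⟨rfl, by omega⟩
  have hmem : ∀ a : Letter n, toGen n M a ∈ genSet n M := by
    rintro ⟨i, s⟩
    refine ⟨i, ?_⟩
    cases s <;> simp [toGen]
  -- the word length is the length of the normal form
  have hWL : ∀ v : List (Letter n),
      wordLength (genSet n M) (wordElt n M v) = len ((φ (wordElt n M v)).unop x₀) := by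
    intro v
    apply le_antisymm
    · obtain ⟨v', v1, v2, v3⟩ := hword _ ((φ (wordElt n M v)).unop x₀) rfl
      have e := (hlist (v.map (toGen n M)) (by
        intro g hg
        simp only [List.mem_map] at hg
        obtain ⟨b, -, rfl⟩ := hg
        exact hmem b) x₀).1
      change ev ((φ (wordElt n M v)).unop x₀) = ev x₀ * wordElt n M v at e
      rw [hev0, one_mul] at e
      rw [e] at v2
      rw [← v1]
      nth_rewrite 1 [← v2]
      exact wordLength_le n M v'
    · apply le_csInf
      · refine ⟨v.length, v.map (toGen n M), ?_, by simp, rfl⟩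
        intro g hg
        simp only [List.mem_map] at hg
        obtain ⟨b, -, rfl⟩ := hg
        exact hmem b
      · rintro N ⟨l, hl, rfl, hp⟩
        have := (hlist l hl x₀).2
        rw [hp, hlen0] at this
        omega
  unfold IsGeodesic at hgeod ⊢
  rw [hWL, wordElt_append, hmul] at hgeod ⊢
  have hw : len ((φ (wordElt n M w)).unop x₀) ≤ w.length := by
    rw [← hWL]
    exact wordLength_le n M w
  generalize (φ (wordElt n M w)).unop x₀ = x at hgeod hw ⊢
  rw [wordElt_replicate, map_pow, MulOpposite.unop_pow]
  simp only [List.length_append, List.length_singleton, List.length_replicate] at hgeod ⊢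
  obtain ⟨i, s⟩ := a
  cases s
  · have e1 : wordElt n M [(i, false)] = (gen n M i)⁻¹ := by simp [wordElt, toGen]
    have e2 : toGen n M (i, false) = (gen n M i)⁻¹ := by simp [toGen]
    rw [e1, hφ'] at hgeod
    rw [e2, hφ']
    have h1 := hlenT' i x
    rw [hipow i x (by omega) k]
    omega
  · have e1 : wordElt n M [(i, true)] = gen n M i := by simp [wordElt, toGen]
    have e2 : toGen n M (i, true) = gen n M i := by simp [toGen]
    rw [e1, hφ1] at hgeod
    rw [e2, hφ1]
    have h1 := hlenT i x
    rw [hpow i x (by omega) k]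
    omega

end ArtinRD
end
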